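/- arXiv:1607.02844 — 3 statements merged into one kernel-verified Lean document; each statement's English description precedes it below -/
import Mathlib

section
/- For every integer k ≥ 6, the quotient of the Nielsen class Ni(A6, C_{2×2}^k) by the equivalence relation generated by the Hurwitz moves together with simultaneous conjugation of all entries by a single element of A6 (the inner action) has exactly three equivalence classes. -/
/-- The `i`-th Hurwitz move on `k`-tuples of elements of a group `G`:
`(g₁,…,gₖ) ↦ (g₁,…,g_{i-1}, g_{i+1}, g_{i+1}⁻¹ g_i g_{i+1}, g_{i+2},…,gₖ)`. -/
def HurwitzMove {G : Type*} [Group G] {k : ℕ} (g h : Fin k → G) : Prop :=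
  ∃ i : ℕ, ∃ hi : i + 1 < k,
    h ⟨i, Nat.lt_of_succ_lt hi⟩ = g ⟨i + 1, hi⟩ ∧
    h ⟨i + 1, hi⟩ = (g ⟨i + 1, hi⟩)⁻¹ * g ⟨i, Nat.lt_of_succ_lt hi⟩ * g ⟨i + 1, hi⟩ ∧
    ∀ j : Fin k, (j : ℕ) ≠ i → (j : ℕ) ≠ i + 1 → h j = g j

/-- Hurwitz equivalence: the equivalence relation generated by the Hurwitz moves. -/
def HurwitzEquiv {G : Type*} [Group G] {k : ℕ} (g h : Fin k → G) : Prop :=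
  Relation.EqvGen HurwitzMove g h

/-- The Nielsen class `Ni(A₆, C_{2×2}^k)`: `k`-tuples of order-2 elements of `A₆`
(products of two disjoint transpositions) with product `1` generating `A₆`. -/
def NielsenSet (k : ℕ) : Set (Fin k → Equiv.Perm (Fin 6)) :=
  {g | (∀ i, g i ∈ alternatingGroup (Fin 6)) ∧ (∀ i, orderOf (g i) = 2) ∧
       (List.ofFn g).prod = 1 ∧
       Subgroup.closure (Set.range g) = alternatingGroup (Fin 6)}

/-- One step of the absolute equivalence: a Hurwitz move, or simultaneous
conjugation of all entries by a single element of `S₆`. -/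
def AbsRel (k : ℕ) (g h : Fin k → Equiv.Perm (Fin 6)) : Prop :=
  HurwitzMove g h ∨ ∃ s : Equiv.Perm (Fin 6), h = fun i => s⁻¹ * g i * s

/-- One step of the inner equivalence: a Hurwitz move, or simultaneous
conjugation of all entries by a single element of `A₆`. -/
def InnerRel (k : ℕ) (g h : Fin k → Equiv.Perm (Fin 6)) : Prop :=
  HurwitzMove g h ∨
    ∃ s ∈ alternatingGroup (Fin 6), h = fun i => s⁻¹ * g i * s

/-- The set of fixed points of a permutation. -/
def FixedPts {n : ℕ} (g : Equiv.Perm (Fin n)) : Set (Fin n) := {x | g x = x}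

/-!
The 45 double transpositions of `A₆` lift uniquely to involutions of the triple cover `3·A₆`, which
is realised here by `6 × 6` monomial matrices whose nonzero entries are cube roots of unity. A tuple
in the Nielsen class therefore has a canonical lift, and the product of this lift is one of the
three central elements. This lifting invariant is unchanged by Hurwitz moves and inner conjugation,
so it remains to see that it takes all three values and determines the Hurwitz class of the tuple.

A word of involutions of the cover generates the cover exactly when it is equivalent to one ending
in a triple whose product has order 12 or 15. By induction on the length, the generating words with
a given product form one Hurwitz class. If two of them start with `a` and `b`, it suffices that some
word with the same product starts with `a, b` and that both `a` and, after the Hurwitz move on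
the first two letters, `b` are followed by a generating word: that move then exchanges `a` for `b`.
For each product there is a hub `e` to which every possible first letter is linked by two such
exchanges. Up to conjugation this is a finite verification, needed only up to length seven because
from length six on every element of the cover is the product of a generating word.
-/

/-- One Hurwitz move on a word, with the tuple `(g₁,…,gₖ)` recorded as a list. -/
inductive BraidMove {G : Type*} [Group G] : List G → List G → Prop
  | swap (a b : G) (l : List G) : BraidMove (a :: b :: l) (b :: (b⁻¹ * a * b) :: l)
  | cons (c : G) {u v : List G} : BraidMove u v → BraidMove (c :: u) (c :: v)

/-- Hurwitz equivalence of words. -/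
def BraidEquiv {G : Type*} [Group G] (u v : List G) : Prop := Relation.EqvGen BraidMove u v

local infix:50 " ∼ " => BraidEquiv

section Braid

variable {G K : Type*} [Group G] [Group K]

namespace BraidEquiv

variable {u v w : List G}

theorem of_move (h : BraidMove u v) : u ∼ v := .rel _ _ h

@[refl] theorem refl (u : List G) : u ∼ u := Relation.EqvGen.refl u

@[symm] theorem symm (h : u ∼ v) : v ∼ u := Relation.EqvGen.symm _ _ h

@[trans] theorem trans (h : u ∼ v) (h₁ : v ∼ w) : u ∼ w := Relation.EqvGen.trans _ _ _ h h₁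

instance : Trans (BraidEquiv (G := G)) BraidEquiv BraidEquiv := ⟨trans⟩

theorem swap (a b : G) (l : List G) : a :: b :: l ∼ b :: (b⁻¹ * a * b) :: l :=
  of_move (.swap a b l)

theorem swap_back (a b : G) (l : List G) : a :: b :: l ∼ (a * b * a⁻¹) :: a :: l := by
  simpa [mul_assoc] using (swap (a * b * a⁻¹) a l).symm

theorem invariant {β : Type*} (f : List G → β) (hf : ∀ u v, BraidMove u v → f u = f v)
    (h : u ∼ v) : f u = f v := by
  induction h with
  | rel _ _ h => exact hf _ _ h
  | refl => rfl
  | symm _ _ _ ih => exact ih.symm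
  | trans _ _ _ _ _ ih₁ ih₂ => exact ih₁.trans ih₂

theorem map_of_move {f : List G → List K} (hf : ∀ u v, BraidMove u v → f u ∼ f v) (h : u ∼ v) :
    f u ∼ f v := by
  induction h with
  | rel _ _ h => exact hf _ _ h
  | refl => rfl
  | symm _ _ _ ih => exact ih.symm
  | trans _ _ _ _ _ ih₁ ih₂ => exact ih₁.trans ih₂

theorem cons (c : G) (h : u ∼ v) : c :: u ∼ c :: v :=
  h.map_of_move fun _ _ h => of_move (.cons c h)

theorem append_left (w : List G) (h : u ∼ v) : w ++ u ∼ w ++ v := by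
  induction w with
  | nil => exact h
  | cons c w ih => exact ih.cons c

theorem map (f : G →* K) (h : u ∼ v) : u.map f ∼ v.map f := by
  refine h.map_of_move fun u v h => of_move ?_
  induction h with
  | swap a b l => simpa using BraidMove.swap (f a) (f b) (l.map f)
  | cons c _ ih => exact ih.cons (f c)

theorem length_eq (h : u ∼ v) : u.length = v.length :=
  h.invariant _ fun u v h => by induction h <;> simp_all

theorem prod_eq (h : u ∼ v) : u.prod = v.prod :=
  h.invariant _ fun u v h => by induction h <;> simp_all [mul_assoc]

theorem forall_mem_iff {S : Set G} (hS : ∀ a ∈ S, ∀ b, a * b * a⁻¹ ∈ S ↔ b ∈ S) (h : u ∼ v) :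
    (∀ x ∈ u, x ∈ S) ↔ ∀ x ∈ v, x ∈ S := by
  refine iff_of_eq <| h.invariant (fun u => ∀ x ∈ u, x ∈ S) fun u v h => propext ?_
  induction h with
  | swap a b l =>
    have conj_mem (hb : b ∈ S) : b⁻¹ * a * b ∈ S ↔ a ∈ S := by
      rw [← hS b hb]; simp [mul_assoc]
    simp only [List.forall_mem_cons, ← and_assoc]
    rw [and_comm (a := a ∈ S), and_congr_right conj_mem]
  | cons c _ ih => simp only [List.forall_mem_cons, ih]

theorem forall_mem_subgroup_iff (H : Subgroup G) (h : u ∼ v) :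
    (∀ x ∈ u, x ∈ H) ↔ ∀ x ∈ v, x ∈ H :=
  h.forall_mem_iff (S := H) fun _ ha _ =>
    (H.mul_mem_cancel_right (H.inv_mem ha)).trans (H.mul_mem_cancel_left ha)

theorem append_right (w : List G) (h : u ∼ v) : u ++ w ∼ v ++ w := by
  refine h.map_of_move (f := (· ++ w)) fun u v h => of_move ?_
  induction h with
  | swap a b l => exact .swap a b (l ++ w)
  | cons c _ ih => exact ih.cons c

theorem cons_append_conj (d : G) (v : List G) : d :: v ∼ v ++ [v.prod⁻¹ * d * v.prod] := by
  induction v generalizing d with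
  | nil => simp [refl]
  | cons b v ih =>
    calc d :: b :: v ∼ b :: (b⁻¹ * d * b) :: v := swap d b v
      _ ∼ b :: (v ++ [v.prod⁻¹ * (b⁻¹ * d * b) * v.prod]) := (ih _).cons b
      _ = b :: v ++ [(b :: v).prod⁻¹ * d * (b :: v).prod] := by simp [mul_assoc]

theorem exists_append_cons_not_mem {H : Subgroup G} (hw : ∀ x ∈ w, x ∈ H)
    (hv : ¬ ∀ x ∈ v ++ w, x ∈ H) : ∃ v' d, d ∉ H ∧ v ++ w ∼ v' ++ d :: w := by
  induction v with
  | nil => exact absurd hw hv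
  | cons a v ih =>
    by_cases h : ∀ x ∈ v ++ w, x ∈ H
    · have ha : a ∉ H := fun ha => hv (List.forall_mem_cons.2 ⟨ha, h⟩)
      have hp : v.prod ∈ H := H.list_prod_mem fun x hx => h x (List.mem_append_left w hx)
      refine ⟨v, v.prod⁻¹ * a * v.prod, ?_, ?_⟩
      · rwa [H.mul_mem_cancel_right hp, H.mul_mem_cancel_left (H.inv_mem hp)]
      · simpa using (cons_append_conj a v).append_right w
    · obtain ⟨v', d, hd, h⟩ := ih h
      exact ⟨a :: v', d, hd, h.cons a⟩

end BraidEquiv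

theorem BraidMove.exists_lift (f : G →* K) {a b : List K} (h : BraidMove a b) :
    (∀ u, u.map f = a → ∃ v, u ∼ v ∧ v.map f = b) ∧
      ∀ v, v.map f = b → ∃ u, v ∼ u ∧ u.map f = a := by
  induction h with
  | swap a b l =>
    refine ⟨fun u hu => ?_, fun v hv => ?_⟩
    · obtain ⟨x, _, rfl, rfl, hyl⟩ := List.map_eq_cons_iff.1 hu
      obtain ⟨y, l, rfl, rfl, rfl⟩ := List.map_eq_cons_iff.1 hyl
      exact ⟨_, .swap x y l, by simp⟩
    · obtain ⟨y, _, rfl, rfl, hxl⟩ := List.map_eq_cons_iff.1 hv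
      obtain ⟨x, l, rfl, hx, rfl⟩ := List.map_eq_cons_iff.1 hxl
      exact ⟨_, .swap_back y x l, by simp [hx, mul_assoc]⟩
  | cons c _ ih =>
    refine ⟨fun u hu => ?_, fun v hv => ?_⟩
    · obtain ⟨x, u, rfl, rfl, rfl⟩ := List.map_eq_cons_iff.1 hu
      obtain ⟨v, huv, hv⟩ := ih.1 u rfl
      exact ⟨x :: v, huv.cons x, by simp [hv]⟩
    · obtain ⟨x, v, rfl, rfl, rfl⟩ := List.map_eq_cons_iff.1 hv
      obtain ⟨u, hvu, hu⟩ := ih.2 v rfl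
      exact ⟨x :: u, hvu.cons x, by simp [hu]⟩

theorem BraidEquiv.exists_lift (f : G →* K) {u : List G} {b : List K} (h : u.map f ∼ b) :
    ∃ v, u ∼ v ∧ v.map f = b := by
  refine (h.invariant (fun b => ∃ v, u ∼ v ∧ v.map f = b) fun a b hab => propext ⟨?_, ?_⟩).mp
    ⟨u, .refl u, rfl⟩
  · rintro ⟨v, huv, hv⟩
    obtain ⟨w, hvw, hw⟩ := (hab.exists_lift f).1 v hv
    exact ⟨w, huv.trans hvw, hw⟩
  · rintro ⟨v, huv, hv⟩
    obtain ⟨w, hvw, hw⟩ := (hab.exists_lift f).2 v hv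
    exact ⟨w, huv.trans hvw, hw⟩

theorem HurwitzMove.braidMove {k : ℕ} {g h : Fin k → G} (hgh : HurwitzMove g h) :
    BraidMove (List.ofFn g) (List.ofFn h) := by
  obtain ⟨i, hi, hleft, hright, hrest⟩ := hgh
  induction i generalizing k with
  | zero =>
    obtain ⟨m, rfl⟩ := Nat.exists_eq_add_of_le' hi
    have htail (j : Fin m) : h j.succ.succ = g j.succ.succ := hrest _ (by simp) (by simp)
    have h0 : h 0 = g 1 := hleft
    have h1 : h 1 = (g 1)⁻¹ * g 0 * g 1 := hright
    simpa [List.ofFn_succ, htail, h0, h1] using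
      BraidMove.swap (g 0) (g 1) (List.ofFn fun j : Fin m => g j.succ.succ)
  | succ i ih =>
    obtain ⟨m, rfl⟩ := Nat.exists_eq_add_of_le' (Nat.one_le_of_lt hi)
    have h0 : h 0 = g 0 := hrest 0 (by simp) (by simp)
    rw [List.ofFn_succ, List.ofFn_succ, h0]
    exact .cons _ (ih (g := fun j => g j.succ) (h := fun j => h j.succ) (Nat.lt_of_succ_lt_succ hi)
      hleft hright fun j hj hj' => hrest j.succ (by simpa) (by simpa))

theorem BraidMove.hurwitzMove {u v : List G} (huv : BraidMove u v) {k : ℕ} {g h : Fin k → G}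
    (hg : List.ofFn g = u) (hh : List.ofFn h = v) : HurwitzMove g h := by
  induction huv generalizing k with
  | swap a b l =>
    have hk : k = l.length + 2 := by simpa using congrArg List.length hg
    subst hk
    simp only [List.ofFn_succ, List.cons.injEq] at hg hh
    obtain ⟨ha, hb, hg⟩ := hg
    obtain ⟨ha', hb', hh⟩ := hh
    subst hb ha
    refine ⟨0, by simp, ha', hb', fun j hj₀ hj₁ => ?_⟩
    induction j using Fin.cases with
    | zero => simp at hj₀
    | succ j =>
      induction j using Fin.cases with
      | zero => simp at hj₁
      | succ j => exact congrFun (List.ofFn_injective (hh.trans hg.symm)) j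
  | @cons c u v _ ih =>
    have hk : k = u.length + 1 := by simpa using congrArg List.length hg
    subst hk
    rw [List.ofFn_succ, List.cons.injEq] at hg hh
    obtain ⟨i, hi, hleft, hright, hrest⟩ := ih hg.2 hh.2
    refine ⟨i + 1, by omega, hleft, hright, fun j hj hj' => ?_⟩
    induction j using Fin.cases with
    | zero => exact hh.1.trans hg.1.symm
    | succ j => exact hrest j (by simpa using hj) (by simpa using hj')

theorem BraidEquiv.hurwitzEquiv {u v : List G} (huv : u ∼ v) {k : ℕ} {g h : Fin k → G}
    (hg : List.ofFn g = u) (hh : List.ofFn h = v) : HurwitzEquiv g h := by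
  induction huv generalizing g h with
  | rel _ _ huv => exact .rel _ _ (huv.hurwitzMove hg hh)
  | refl => exact List.ofFn_injective (hg.trans hh.symm) ▸ .refl _
  | symm _ _ _ ih => exact .symm _ _ (ih hh hg)
  | trans u w v huw _ ih₁ ih₂ =>
    obtain rfl : w.length = k := by
      simp [← BraidEquiv.length_eq huw, ← hg]
    exact .trans _ _ _ (ih₁ hg (List.ofFn_get w)) (ih₂ (List.ofFn_get w) hh)

end Braid

section Ample

variable {G : Type*} [Group G] {T A : Set G} {u v : List G} {a b c g : G} {n : ℕ}

/-- A word with letters in `T` is ample when some Hurwitz-equivalent word ends in a triple whose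
product lies in `A`. -/
def Ample (T A : Set G) (u : List G) : Prop :=
  (∀ x ∈ u, x ∈ T) ∧ ∃ v w, u ∼ v ++ w ∧ w.length = 3 ∧ w.prod ∈ A

/-- The products of the ample words of length `n`. -/
def ampleProducts (T A : Set G) (n : ℕ) : Set G :=
  {g | ∃ u, Ample T A u ∧ u.length = n ∧ u.prod = g}

/-- The ample words of length `n` with product `g` form a single Hurwitz class. -/
def BraidTransitive (T A : Set G) (n : ℕ) (g : G) : Prop :=
  ∀ u v, Ample T A u → Ample T A v → u.length = n → v.length = n → u.prod = g → v.prod = g → u ∼ v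

/-- Some word of product `g` starts with `a, b`, and both `a` and, after the Hurwitz move that
brings `b` to the front, `b` are followed by an ample word of length `n`. -/
def Bridge (T A : Set G) (n : ℕ) (g a b : G) : Prop :=
  ∃ w, Ample T A (b :: w) ∧ Ample T A ((b⁻¹ * a * b) :: w) ∧ w.length + 1 = n ∧ a * b * w.prod = g

theorem Ample.of_braidEquiv (hT : ∀ a ∈ T, ∀ b, a * b * a⁻¹ ∈ T ↔ b ∈ T) (hu : Ample T A u)
    (h : u ∼ v) : Ample T A v :=
  ⟨(h.forall_mem_iff hT).1 hu.1, hu.2.imp fun _ => .imp fun _ hw => ⟨h.symm.trans hw.1, hw.2⟩⟩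

theorem Ample.cons (hc : c ∈ T) (hu : Ample T A u) : Ample T A (c :: u) := by
  obtain ⟨hu, v, w, huv, hw⟩ := hu
  exact ⟨List.forall_mem_cons.2 ⟨hc, hu⟩, c :: v, w, huv.cons c, hw⟩

theorem ample_iff_of_length_eq_three (hu : u.length = 3) :
    Ample T A u ↔ (∀ x ∈ u, x ∈ T) ∧ u.prod ∈ A := by
  refine and_congr_right fun _ =>
    ⟨fun ⟨v, w, huv, hw, hA⟩ => ?_, fun hA => ⟨[], u, .refl u, hu, hA⟩⟩
  have hlen := huv.length_eq
  obtain rfl : v = [] := by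
    rw [List.length_append] at hlen
    exact List.length_eq_zero_iff.1 (by omega)
  exact huv.prod_eq ▸ hA

theorem Ample.exists_cons (hT : ∀ a ∈ T, ∀ b, a * b * a⁻¹ ∈ T ↔ b ∈ T) (hu : Ample T A u)
    (hlen : 3 < u.length) : ∃ a ∈ T, ∃ v, u ∼ a :: v ∧ Ample T A v := by
  obtain ⟨huT, v, w, huv, hw, hA⟩ := hu
  obtain _ | ⟨a, v⟩ := v
  · have := huv.length_eq
    simp only [List.nil_append] at this
    omega
  · obtain ⟨ha, hv⟩ := List.forall_mem_cons.1 ((huv.forall_mem_iff hT).1 huT)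
    exact ⟨a, ha, v ++ w, huv, hv, v, w, .refl _, hw, hA⟩

theorem Ample.map {K : Type*} [Group K] {T' A' : Set K} {φ : G →* K} (hφT : Set.MapsTo φ T T')
    (hφA : Set.MapsTo φ A A') (hu : Ample T A u) : Ample T' A' (u.map φ) := by
  obtain ⟨hu, v, w, huv, hw, hA⟩ := hu
  refine ⟨by simpa using fun x hx => hφT (hu x hx), v.map φ, w.map φ, ?_, by simpa, ?_⟩
  · simpa using huv.map φ
  · simpa [map_list_prod] using hφA hA

theorem mul_mem_ampleProducts (hc : c ∈ T) (hg : g ∈ ampleProducts T A n) :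
    c * g ∈ ampleProducts T A (n + 1) := by
  obtain ⟨u, hu, rfl, rfl⟩ := hg
  exact ⟨c :: u, hu.cons hc, rfl, List.prod_cons⟩

theorem exists_mul_of_mem_ampleProducts (hT : ∀ a ∈ T, ∀ b, a * b * a⁻¹ ∈ T ↔ b ∈ T) (hn : 3 ≤ n)
    (hg : g ∈ ampleProducts T A (n + 1)) : ∃ c ∈ T, ∃ h ∈ ampleProducts T A n, c * h = g := by
  obtain ⟨u, hu, hlen, rfl⟩ := hg
  obtain ⟨c, hc, v, huv, hv⟩ := hu.exists_cons hT (by omega)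
  have hlen' := huv.length_eq
  exact ⟨c, hc, v.prod, ⟨v, hv, by simp_all, rfl⟩, by simp [huv.prod_eq]⟩

theorem BraidTransitive.braidEquiv_of_bridge (hn : ∀ h, BraidTransitive T A n h)
    (hab : Bridge T A n g a b) (hu : Ample T A u) (hv : Ample T A v) (hlu : u.length = n)
    (hlv : v.length = n) (hgu : a * u.prod = g) (hgv : b * v.prod = g) : a :: u ∼ b :: v := by
  obtain ⟨w, hbw, hcw, hlw, rfl⟩ := hab
  calc a :: u ∼ a :: b :: w :=
        (hn u.prod u (b :: w) hu hbw hlu hlw rfl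
          (by simpa [mul_assoc] using hgu.symm)).cons a
    _ ∼ b :: (b⁻¹ * a * b) :: w := .swap a b w
    _ ∼ b :: v :=
        (hn v.prod _ v hcw hv hlw hlv
          (by simpa [mul_assoc, ← eq_inv_mul_iff_mul_eq] using hgv.symm) rfl).cons b

theorem BraidTransitive.succ (hT : ∀ a ∈ T, ∀ b, a * b * a⁻¹ ∈ T ↔ b ∈ T) (hn : 3 ≤ n)
    (ih : ∀ h, BraidTransitive T A n h) {e : G}
    (he : ∀ a ∈ T, a⁻¹ * g ∈ ampleProducts T A n →
      ∃ b, Bridge T A n g a b ∧ Bridge T A n g b e) :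
    BraidTransitive T A (n + 1) g := by
  have to_hub (u) (hu : Ample T A u) (hlu : u.length = n + 1) (hgu : u.prod = g) :
      (∃ v, Ample T A v ∧ v.length = n ∧ e * v.prod = g) ∧
        ∀ v, Ample T A v → v.length = n → e * v.prod = g → u ∼ e :: v := by
    obtain ⟨a, ha, u', huu', hu'⟩ := hu.exists_cons hT (by omega)
    have hlu' : u'.length = n := by simpa [hlu] using huu'.length_eq.symm
    have hgu' : a * u'.prod = g := by simp [← hgu, huu'.prod_eq]
    obtain ⟨b, hab, hbe⟩ := he a ha ⟨u', hu', hlu', by simp [← hgu']⟩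
    have ⟨w, _, hw, hlw, hgw⟩ := hab
    have ⟨w', _, hw', hlw', hgw'⟩ := hbe
    refine ⟨⟨_, hw', hlw', by simp [← hgw', mul_assoc]⟩, fun v hv hlv hgv => ?_⟩
    have hgw : b * ((b⁻¹ * a * b) :: w).prod = g := by simp [← hgw, mul_assoc]
    exact huu'.trans <| (braidEquiv_of_bridge ih hab hu' hw hlu' hlw hgu' hgw).trans <|
      braidEquiv_of_bridge ih hbe hw hv hlw hlv hgw hgv
  intro u u' hu hu' hlu hlu' hgu hgu'
  obtain ⟨⟨v, hv, hlv, hgv⟩, huv⟩ := to_hub u hu hlu hgu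
  exact (huv v hv hlv hgv).trans ((to_hub u' hu' hlu' hgu').2 v hv hlv hgv).symm

theorem Bridge.of_mem_ampleProducts (hT : ∀ a ∈ T, ∀ b, a * b * a⁻¹ ∈ T ↔ b ∈ T) (ha : a ∈ T)
    (hb : b ∈ T) (h : b⁻¹ * a⁻¹ * g ∈ ampleProducts T A n) : Bridge T A (n + 1) g a b := by
  obtain ⟨w, hw, hlw, hgw⟩ := h
  have hc : b⁻¹ * a * b ∈ T := (hT b hb _).1 (by simpa [mul_assoc] using ha)
  exact ⟨w, hw.cons hb, hw.cons hc, by rw [hlw], by simp [hgw, mul_assoc]⟩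

theorem Bridge.of_pair (hT : ∀ a ∈ T, ∀ b, a * b * a⁻¹ ∈ T ↔ b ∈ T) {x y : G} (ha : a ∈ T)
    (hb : b ∈ T) (hx : x ∈ T) (hy : y ∈ T) (hg : a * b * x * y = g) (hag : a⁻¹ * g ∈ A)
    (hbg : b⁻¹ * g ∈ A) : Bridge T A 3 g a b := by
  have hc : b⁻¹ * a * b ∈ T := (hT b hb _).1 (by simpa [mul_assoc] using ha)
  subst hg
  refine ⟨[x, y], ?_, ?_, rfl, by simp [mul_assoc]⟩
  · exact (ample_iff_of_length_eq_three rfl).2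
      ⟨by simp [hb, hx, hy], by simpa [mul_assoc] using hag⟩
  · exact (ample_iff_of_length_eq_three rfl).2
      ⟨by simp [hc, hx, hy], by simpa [mul_assoc] using hbg⟩

theorem prod_map_conj (s : G) (u : List G) :
    (u.map (MulAut.conj s).toMonoidHom).prod = s * u.prod * s⁻¹ := by
  simp [← map_list_prod]

end Ample

/-- Depth-first search with a bounded number of steps: the elements reached from `todo` through
`next`, added to `seen`. -/
def explore {α : Type*} [DecidableEq α] (next : α → List α) : ℕ → List α → List α → List α
  | 0, _, seen => seen
  | _ + 1, [], seen => seen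
  | n + 1, a :: todo, seen =>
    if a ∈ seen then explore next n todo seen else explore next n (next a ++ todo) (a :: seen)

theorem forall_mem_explore {α : Type*} [DecidableEq α] {next : α → List α} {p : α → Prop}
    (hnext : ∀ a, p a → ∀ b ∈ next a, p b) {n : ℕ} {todo seen : List α} (htodo : ∀ a ∈ todo, p a)
    (hseen : ∀ a ∈ seen, p a) : ∀ a ∈ explore next n todo seen, p a := by
  induction n generalizing todo seen with
  | zero => exact hseen
  | succ n ih =>
    obtain _ | ⟨a, todo⟩ := todo
    · exact hseen
    · obtain ⟨ha, htodo⟩ := List.forall_mem_cons.1 htodo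
      rw [explore]
      split_ifs
      · exact ih htodo hseen
      · exact ih (List.forall_mem_append.2 ⟨hnext a ha, htodo⟩) (List.forall_mem_cons.2 ⟨ha, hseen⟩)

theorem cycleType_eq_two_two_iff {α : Type*} [Fintype α] [DecidableEq α] (hα : Fintype.card α < 8)
    {σ : Equiv.Perm α} : σ.cycleType = {2, 2} ↔ σ ∈ alternatingGroup α ∧ orderOf σ = 2 := by
  refine ⟨fun h => ⟨?_, ?_⟩, fun ⟨hσ, h⟩ => ?_⟩
  · rw [Equiv.Perm.mem_alternatingGroup, Equiv.Perm.sign_of_cycleType, h]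
    decide
  · rw [← Equiv.Perm.lcm_cycleType, h]
    rfl
  · obtain ⟨n, hn⟩ := Equiv.Perm.cycleType_prime_order (h.symm ▸ Nat.prime_two)
    rw [h] at hn
    have hsum := Equiv.Perm.sum_cycleType_le σ
    have hsign := Equiv.Perm.sign_of_cycleType σ
    rw [hn, Multiset.sum_replicate, smul_eq_mul] at hsum
    rw [Equiv.Perm.mem_alternatingGroup.1 hσ, hn, Multiset.sum_replicate,
      Multiset.card_replicate] at hsign
    obtain rfl | rfl | rfl : n = 0 ∨ n = 1 ∨ n = 2 := by omega
    · exact absurd hsign (by decide)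
    · rw [hn]
      rfl
    · exact absurd hsign (by decide)

/-- The group of `6 × 6` monomial matrices whose nonzero entries are cube roots of unity, written
additively: `g` sends the basis vector `eⱼ` to `ω ^ g.left (g.right j)` times `e_{g.right j}`. -/
abbrev Monomial : Type :=
  (Fin 6 → Multiplicative (ZMod 3)) ⋊[mulAutArrow] Equiv.Perm (Fin 6)

namespace Monomial

/-- The exponent of the nonzero entry of column `i`. -/
def phase (g : Monomial) (i : Fin 6) : ZMod 3 := (g.left (g.right i)).toAdd

/-- Column `i` of a monomial matrix: the row and the exponent of its nonzero entry, packed into one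
base-18 digit. -/
def digit (g : Monomial) (i : Fin 6) : Fin 18 := finProdFinEquiv (g.right i, (g.phase i : Fin 3))

/-- The number whose base-18 digits are the columns. -/
def code (g : Monomial) : ℕ := finFunctionFinEquiv g.digit

theorem phase_mul (g h : Monomial) (i : Fin 6) :
    (g * h).phase i = g.phase (h.right i) + h.phase i := by
  have haction : mulAutArrow g.right h.left (g.right (h.right i)) = h.left (h.right i) :=
    congrArg h.left (g.right.symm_apply_apply _)
  simp only [phase, SemidirectProduct.mul_left, SemidirectProduct.mul_right, Pi.mul_apply,
    Equiv.Perm.mul_apply, haction, toAdd_mul]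

theorem digit_val (g : Monomial) (i : Fin 6) :
    (g.digit i : ℕ) = (g.phase i).val + 3 * g.right i := rfl

theorem digit_div_three (g : Monomial) (i : Fin 6) : (g.digit i : ℕ) / 3 = g.right i := by
  have := (g.phase i).val_lt
  rw [digit_val]
  omega

theorem code_injective : Function.Injective code := by
  intro g h hgh
  have hd : g.digit = h.digit := finFunctionFinEquiv.injective (Fin.ext hgh)
  have hi (i : Fin 6) : g.right i = h.right i ∧ g.phase i = h.phase i :=
    Prod.ext_iff.1 (finProdFinEquiv.injective (congrFun hd i))
  have hr : g.right = h.right := Equiv.ext fun i => (hi i).1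
  refine SemidirectProduct.ext (funext fun j => Multiplicative.toAdd.injective ?_) hr
  simpa [phase, ← hr] using (hi (g.right⁻¹ j)).2

theorem code_div_mod (g : Monomial) (i : Fin 6) : g.code / 18 ^ (i : ℕ) % 18 = g.digit i := by
  conv_rhs => rw [← finFunctionFinEquiv.symm_apply_apply g.digit]
  rfl

theorem code_ne_zero (g : Monomial) : g.code ≠ 0 := by
  intro h
  have hright (i : Fin 6) : (g.right i : ℕ) = 0 := by
    rw [← digit_div_three, ← code_div_mod, h]; simp
  exact absurd (g.right.injective (Fin.ext ((hright 0).trans (hright 1).symm))) (by decide)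

theorem digit_mul (g h : Monomial) (i : Fin 6) :
    ((g * h).digit i : ℕ) =
      3 * (g.digit (h.right i) / 3) + (g.digit (h.right i) + h.digit i) % 3 := by
  rw [digit_div_three, digit_val, phase_mul, ZMod.val_add, digit_val, digit_val,
    SemidirectProduct.mul_right, Equiv.Perm.mul_apply]
  omega

/-- The contribution of the column of weight `w = 18 ^ i` to the code of a product. -/
def mulColumn (a b w : ℕ) : ℕ :=
  let d := Nat.mod (Nat.div b w) 18
  let e := Nat.mod (Nat.div a (Nat.pow 18 (Nat.div d 3))) 18
  Nat.mul (Nat.add (Nat.mul 3 (Nat.div e 3)) (Nat.mod (Nat.add e d) 3)) w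

theorem mulColumn_code (g h : Monomial) (i : Fin 6) :
    mulColumn g.code h.code (18 ^ (i : ℕ)) = (g * h).digit i * 18 ^ (i : ℕ) := by
  have hrow : h.code / 18 ^ (i : ℕ) % 18 / 3 = h.right i := by rw [code_div_mod, digit_div_three]
  change (3 * (g.code / 18 ^ (h.code / 18 ^ (i : ℕ) % 18 / 3) % 18 / 3) +
    (g.code / 18 ^ (h.code / 18 ^ (i : ℕ) % 18 / 3) % 18 + h.code / 18 ^ (i : ℕ) % 18) % 3) * _ = _
  rw [hrow, code_div_mod, code_div_mod, ← digit_mul]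

/-- The code of a product in terms of the codes of its factors. Matching on successors makes the
kernel evaluate both arguments, so that repeated products are found in its cache. -/
def mulCode : ℕ → ℕ → ℕ
  | a + 1, b + 1 => mulColumn (a + 1) (b + 1) 1 + mulColumn (a + 1) (b + 1) 18 +
      mulColumn (a + 1) (b + 1) 324 + mulColumn (a + 1) (b + 1) 5832 +
      mulColumn (a + 1) (b + 1) 104976 + mulColumn (a + 1) (b + 1) 1889568
  | _, _ => 0

theorem code_mul (g h : Monomial) : (g * h).code = mulCode g.code h.code := by
  have hsum : (g * h).code = ∑ i : Fin 6, mulColumn g.code h.code (18 ^ (i : ℕ)) := by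
    simp only [mulColumn_code]
    exact finFunctionFinEquiv_apply _
  obtain ⟨a, ha⟩ := Nat.exists_eq_succ_of_ne_zero g.code_ne_zero
  obtain ⟨b, hb⟩ := Nat.exists_eq_succ_of_ne_zero h.code_ne_zero
  rw [hsum, Fin.sum_univ_six, ha, hb]
  rfl

end Monomial

/-- The monomial group with its elements stored as codes, so that the kernel can compute in it with
natural-number arithmetic. -/
def Packed : Type := Set.range Monomial.code

namespace Packed

instance : BEq Packed := ⟨fun a b => Nat.beq a.1 b.1⟩

instance : LawfulBEq Packed where
  eq_of_beq h := Subtype.ext (Nat.eq_of_beq_eq_true h)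
  rfl := Nat.beq_refl _

instance : DecidableEq Packed := instDecidableEqOfLawfulBEq

/-- The packed form of a monomial matrix. -/
def of (g : Monomial) : Packed := ⟨g.code, g, rfl⟩

theorem of_bijective : Function.Bijective of :=
  ⟨fun _ _ h => Monomial.code_injective (congrArg Subtype.val h), fun ⟨_, g, hg⟩ =>
    ⟨g, Subtype.ext hg⟩⟩

instance : Mul Packed where
  mul a b := ⟨Monomial.mulCode a.1 b.1, by
    obtain ⟨_, g, rfl⟩ := a
    obtain ⟨_, h, rfl⟩ := b
    exact ⟨g * h, Monomial.code_mul g h⟩⟩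

instance : One Packed := ⟨of 1⟩

/-- The bijection of monomial matrices with their packed forms. -/
noncomputable def ofEquiv : Monomial ≃ Packed := Equiv.ofBijective of of_bijective

theorem of_mul (g h : Monomial) : of (g * h) = of g * of h := Subtype.ext (Monomial.code_mul g h)

noncomputable instance : Inv Packed := ⟨fun a => of (ofEquiv.symm a)⁻¹⟩

noncomputable instance : Group Packed :=
  Group.ofLeftAxioms
    (of_bijective.2.forall₃.2 fun a b c => by simp only [← of_mul, mul_assoc])
    (of_bijective.2.forall.2 fun a => (of_mul 1 a).symm.trans (by rw [one_mul]))
    (of_bijective.2.forall.2 fun a => by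
      change of (ofEquiv.symm (ofEquiv a))⁻¹ * of a = of 1
      rw [Equiv.symm_apply_apply, ← of_mul, inv_mul_cancel])

/-- The permutation underlying a monomial matrix. -/
noncomputable def toPerm : Packed →* Equiv.Perm (Fin 6) :=
  SemidirectProduct.rightHom.comp
    (MulEquiv.symm { ofEquiv with map_mul' := of_mul } : Packed ≃* Monomial).toMonoidHom

theorem toPerm_of (g : Monomial) : toPerm (of g) = g.right :=
  congrArg SemidirectProduct.right (ofEquiv.symm_apply_apply g)

theorem toPerm_apply (a : Packed) (i : Fin 6) :
    (toPerm a i : ℕ) = a.1 / 18 ^ (i : ℕ) % 18 / 3 := by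
  obtain ⟨g, rfl⟩ := of_bijective.2 a
  rw [toPerm_of, ← Monomial.digit_div_three, ← Monomial.code_div_mod]
  rfl

section Cover

/-- The involution exchanging the lines of `e_a, e_b` and those of `e_c, e_d`, with
`e_a ↦ ω ^ x e_b` and `e_c ↦ ω ^ y e_d`. -/
def doubleSwap (a b : Fin 6) (x : ZMod 3) (c d : Fin 6) (y : ZMod 3) : Packed :=
  of ⟨fun i => .ofAdd <|
    if i = b then x else if i = a then -x else if i = d then y else if i = c then -y else 0,
    Equiv.swap a b * Equiv.swap c d⟩

/-- The involution from which all others are obtained by conjugation. -/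
def baseInvolution : Packed := doubleSwap 0 1 0 2 3 0

/-- Generators of the triple cover of `A₆` inside the monomial group. -/
def generators : List Packed := [baseInvolution, doubleSwap 0 2 0 1 4 0, doubleSwap 0 1 1 3 5 1]

/-- Multiplication by `ω`. -/
def scalar : Packed := of ⟨fun _ => .ofAdd 1, 1⟩

/-- The centre of the triple cover. -/
def scalars : List Packed := [1, scalar, scalar * scalar]

/-- The involutions of the triple cover, as the conjugacy class of `baseInvolution`. -/
def involutions : List Packed :=
  explore (fun x => generators.map fun s => s * x * s) 1000 [baseInvolution] []

/-- Representatives of the involutions under conjugation by the centralizer of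
`baseInvolution`. -/
def partners : List Packed :=
  [baseInvolution, doubleSwap 0 1 2 2 5 1, doubleSwap 0 1 0 4 5 0, doubleSwap 0 2 2 1 5 1,
    doubleSwap 0 2 1 1 3 1, doubleSwap 0 2 0 1 4 0, doubleSwap 0 2 1 5 4 2, doubleSwap 0 5 2 1 4 2,
    doubleSwap 0 5 1 2 4 2]

/-- A list meeting every conjugacy class of the triple cover. -/
def representatives : List Packed :=
  scalars.flatMap fun c => partners.map fun b => c * (baseInvolution * b)

section Computation

set_option maxRecDepth 100000

theorem conj_mem_involutions_of_mem_generators :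
    ∀ s ∈ generators, ∀ x ∈ involutions, s * x * s ∈ involutions := by decide +kernel

theorem generators_subset_involutions : ∀ s ∈ generators, s ∈ involutions := by decide +kernel

theorem length_involutions : involutions.length = 45 := by decide +kernel

theorem nodup_involutions : involutions.Nodup := by decide +kernel

theorem mul_self_of_mem_generators : ∀ s ∈ generators, s * s = 1 := by decide +kernel

theorem baseInvolution_mem_generators : baseInvolution ∈ generators := List.mem_cons_self

theorem baseInvolution_mem_involutions : baseInvolution ∈ involutions :=
  generators_subset_involutions _ baseInvolution_mem_generators

theorem baseInvolution_ne_one : baseInvolution ≠ 1 := by decide +kernel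

theorem scalar_mul_generator :
    ∀ c ∈ scalars, ∀ s ∈ generators, c * s = s * c := by decide +kernel

theorem exists_scalar_mul_eq : ∀ c ∈ scalars, ∀ d ∈ scalars, ∃ e ∈ scalars, e * d = c := by
  decide +kernel

theorem exists_pow_five_eq_scalar :
    ∃ x ∈ involutions, ∃ y ∈ involutions, (baseInvolution * x * y) ^ 5 = scalar := by
  decide +kernel

theorem partners_subset_involutions : ∀ b ∈ partners, b ∈ involutions := by decide +kernel

theorem mem_explore_partners : ∀ x ∈ involutions,
    x ∈ explore (fun x => (involutions.filter fun s =>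
      s * baseInvolution = baseInvolution * s).map fun s => s * x * s) 1000 partners [] := by
  decide +kernel

-- The square is tested first because it is much cheaper than the search through `involutions`.
theorem exists_scalar_mul_mem_involutions : ∀ q ∈ involutions, ∀ b ∈ partners, ∃ s ∈ involutions,
    (s * (q * (baseInvolution * b))) * (s * (q * (baseInvolution * b))) ∈ scalars ∧
      ∃ c ∈ scalars, c * (s * (q * (baseInvolution * b))) ∈ involutions := by
  decide +kernel

end Computation

/-- The triple cover of `A₆`. -/
noncomputable def cover : Subgroup Packed := Subgroup.closure {s | s ∈ generators}

variable {s x y g : Packed}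

theorem conj_mem_involutions_iff (hs : s ∈ cover) :
    s * x * s⁻¹ ∈ involutions ↔ x ∈ involutions := by
  induction hs using Subgroup.closure_induction generalizing x with
  | mem s hs =>
    have hinv : s⁻¹ = s := inv_eq_of_mul_eq_one_left (mul_self_of_mem_generators s hs)
    rw [hinv]
    refine ⟨fun h => ?_, conj_mem_involutions_of_mem_generators s hs x⟩
    simpa [← mul_assoc, mul_self_of_mem_generators s hs, mul_assoc x] using
      conj_mem_involutions_of_mem_generators s hs _ h
  | one => simp
  | mul s t _ _ hs ht =>
    rw [← ht (x := x), ← hs (x := t * x * t⁻¹)]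
    simp only [mul_inv_rev, mul_assoc]
  | inv s _ hs => rw [← hs]; simp [mul_assoc]

theorem exists_conj_baseInvolution (hx : x ∈ involutions) :
    ∃ s ∈ cover, s * baseInvolution * s⁻¹ = x := by
  refine forall_mem_explore (p := fun x => ∃ s ∈ cover, s * baseInvolution * s⁻¹ = x) ?_ ?_
    (by simp) x hx
  · rintro _ ⟨s, hs, rfl⟩ y hy
    obtain ⟨t, ht, rfl⟩ := List.mem_map.1 hy
    refine ⟨t * s, cover.mul_mem (Subgroup.subset_closure ht) hs, ?_⟩
    rw [mul_inv_rev, inv_eq_of_mul_eq_one_left (mul_self_of_mem_generators t ht)]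
    simp only [mul_assoc]
  · simpa using ⟨1, cover.one_mem, by simp⟩

attribute [irreducible] involutions

theorem involutions_subset_cover (hx : x ∈ involutions) : x ∈ cover := by
  obtain ⟨s, hs, rfl⟩ := exists_conj_baseInvolution hx
  exact cover.mul_mem (cover.mul_mem hs (Subgroup.subset_closure baseInvolution_mem_generators))
    (cover.inv_mem hs)

theorem closure_involutions : Subgroup.closure {x | x ∈ involutions} = cover :=
  le_antisymm ((Subgroup.closure_le _).2 fun _ => involutions_subset_cover)
    (Subgroup.closure_mono fun s hs => generators_subset_involutions s hs)

theorem mul_self_of_mem_involutions (hx : x ∈ involutions) : x * x = 1 := by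
  obtain ⟨s, _, rfl⟩ := exists_conj_baseInvolution hx
  rw [conj_mul, mul_self_of_mem_generators _ baseInvolution_mem_generators, mul_one, mul_inv_cancel]

theorem inv_eq_self_of_mem_involutions (hx : x ∈ involutions) : x⁻¹ = x :=
  inv_eq_of_mul_eq_one_left (mul_self_of_mem_involutions hx)

theorem ne_one_of_mem_involutions (hx : x ∈ involutions) : x ≠ 1 := by
  obtain ⟨s, _, rfl⟩ := exists_conj_baseInvolution hx
  simpa using baseInvolution_ne_one

theorem scalar_mem_cover : scalar ∈ cover := by
  obtain ⟨x, hx, y, hy, h⟩ := exists_pow_five_eq_scalar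
  rw [← h]
  exact cover.pow_mem (cover.mul_mem (cover.mul_mem
    (involutions_subset_cover baseInvolution_mem_involutions) (involutions_subset_cover hx))
    (involutions_subset_cover hy)) 5

theorem scalars_subset_cover {c : Packed} (hc : c ∈ scalars) : c ∈ cover := by
  obtain rfl | rfl | rfl : c = 1 ∨ c = scalar ∨ c = scalar * scalar := by simpa [scalars] using hc
  · exact cover.one_mem
  · exact scalar_mem_cover
  · exact cover.mul_mem scalar_mem_cover scalar_mem_cover

theorem scalar_commute {c : Packed} (hc : c ∈ scalars) (hg : g ∈ cover) : Commute c g := by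
  have hle : cover ≤ Subgroup.centralizer {c} :=
    (Subgroup.closure_le _).2 fun s hs => Subgroup.mem_centralizer_singleton_iff.2
      (scalar_mul_generator c hc s hs).symm
  exact (Subgroup.mem_centralizer_singleton_iff.1 (hle hg)).symm

theorem conj_mem_scalars_iff (hs : s ∈ cover) : s * g * s⁻¹ ∈ scalars ↔ g ∈ scalars := by
  refine ⟨fun h => ?_, fun h => ?_⟩
  · have hg : s * g * s⁻¹ = g := by
      simpa [mul_assoc] using (scalar_commute h hs).eq.symm
    rwa [hg] at h
  · rwa [← (scalar_commute h hs).eq, mul_inv_cancel_right]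

theorem exists_conj_partner (hx : x ∈ involutions) :
    ∃ s ∈ cover, Commute s baseInvolution ∧ ∃ b ∈ partners, s * b * s⁻¹ = x := by
  refine forall_mem_explore (p := fun x =>
    ∃ s ∈ cover, Commute s baseInvolution ∧ ∃ b ∈ partners, s * b * s⁻¹ = x) ?_ ?_ (by simp) x
    (mem_explore_partners x hx)
  · rintro _ ⟨s, hs, hcomm, b, hb, rfl⟩ y hy
    obtain ⟨t, ht, rfl⟩ := List.mem_map.1 hy
    obtain ⟨ht, hcomm'⟩ := List.mem_filter.1 ht
    refine ⟨t * s, cover.mul_mem (involutions_subset_cover ht) hs,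
      Commute.mul_left (of_decide_eq_true hcomm' : t * _ = _ * t) hcomm, b, hb, ?_⟩
    rw [mul_inv_rev, inv_eq_self_of_mem_involutions ht]
    simp only [mul_assoc]
  · exact fun b hb => ⟨1, cover.one_mem, Commute.one_left _, b, hb, by simp⟩

theorem exists_conj_pair (hx : x ∈ involutions) (hy : y ∈ involutions) :
    ∃ s ∈ cover, ∃ b ∈ partners, s * baseInvolution * s⁻¹ = x ∧ s * b * s⁻¹ = y := by
  obtain ⟨s, hs, rfl⟩ := exists_conj_baseInvolution hx
  obtain ⟨t, ht, hcomm, b, hb, hy⟩ := exists_conj_partner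
    ((conj_mem_involutions_iff (x := y) (cover.inv_mem hs)).2 hy)
  refine ⟨s * t, cover.mul_mem hs ht, b, hb, ?_, ?_⟩
  · simp [mul_assoc, hcomm.eq]
  · calc s * t * b * (s * t)⁻¹ = s * (t * b * t⁻¹) * s⁻¹ := by simp only [mul_inv_rev, mul_assoc]
      _ = y := by rw [hy]; simp [mul_assoc]

theorem mul_mem_representatives {c b : Packed} (hc : c ∈ scalars) (hb : b ∈ partners) :
    c * (baseInvolution * b) ∈ representatives :=
  List.mem_flatMap.2 ⟨c, hc, List.mem_map.2 ⟨b, hb, rfl⟩⟩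

theorem exists_mul_representative {q r : Packed} (hq : q ∈ involutions)
    (hr : r ∈ representatives) : ∃ s ∈ cover, ∃ r' ∈ representatives, s * r' * s⁻¹ = q * r := by
  obtain ⟨c, hc, hr⟩ := List.mem_flatMap.1 hr
  obtain ⟨b, hb, rfl⟩ := List.mem_map.1 hr
  obtain ⟨x, hx, -, d, hd, hy⟩ := exists_scalar_mul_mem_involutions q hq b hb
  obtain ⟨e, he, rfl⟩ := exists_scalar_mul_eq c hc d hd
  obtain ⟨s, hs, b', hb', hsx, hsy⟩ := exists_conj_pair hx hy
  have hxcover := involutions_subset_cover hx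
  refine ⟨s, hs, _, mul_mem_representatives he hb', ?_⟩
  calc s * (e * (baseInvolution * b')) * s⁻¹
      = e * ((s * baseInvolution * s⁻¹) * (s * b' * s⁻¹)) := by
        rw [← mul_assoc s e, ← (scalar_commute he hs).eq]; simp [mul_assoc]
    _ = e * (x * (d * (x * (q * (baseInvolution * b))))) := by rw [hsx, hsy]
    _ = e * (d * (q * (baseInvolution * b))) := by
        rw [← mul_assoc x d, ← (scalar_commute hd hxcover).eq, mul_assoc d, ← mul_assoc x x,
          mul_self_of_mem_involutions hx, one_mul]
    _ = q * (e * d * (baseInvolution * b)) := by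
        rw [← mul_assoc e d, ← mul_assoc (e * d) q,
          ((scalar_commute hc (involutions_subset_cover hq))).eq, mul_assoc q]

theorem exists_conj_representative (hg : g ∈ cover) :
    ∃ s ∈ cover, ∃ r ∈ representatives, s * r * s⁻¹ = g := by
  have step (q g : Packed) (hq : q ∈ involutions)
      (ih : ∃ s ∈ cover, ∃ r ∈ representatives, s * r * s⁻¹ = g) :
      ∃ s ∈ cover, ∃ r ∈ representatives, s * r * s⁻¹ = q * g := by
    obtain ⟨s, hs, r, hr, rfl⟩ := ih
    obtain ⟨t, ht, r', hr', h⟩ := exists_mul_representative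
      ((conj_mem_involutions_iff (x := q) (cover.inv_mem hs)).2 hq) hr
    refine ⟨s * t, cover.mul_mem hs ht, r', hr', ?_⟩
    calc s * t * r' * (s * t)⁻¹ = s * (t * r' * t⁻¹) * s⁻¹ := by simp only [mul_inv_rev, mul_assoc]
      _ = q * (s * r * s⁻¹) := by rw [h]; simp [mul_assoc]
  rw [← closure_involutions] at hg
  induction hg using Subgroup.closure_induction_left with
  | one =>
    refine ⟨1, cover.one_mem, _, mul_mem_representatives (c := 1) (b := baseInvolution)
      (by simp [scalars]) (by simp [partners]), ?_⟩
    simp [mul_self_of_mem_generators _ baseInvolution_mem_generators]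
  | mul_left q hq g _ ih => exact step q g hq ih
  | inv_mul_cancel q hq g _ ih => rw [inv_eq_self_of_mem_involutions hq]; exact step q g hq ih

theorem representatives_subset_cover {r : Packed} (hr : r ∈ representatives) : r ∈ cover := by
  obtain ⟨c, hc, hr⟩ := List.mem_flatMap.1 hr
  obtain ⟨b, hb, rfl⟩ := List.mem_map.1 hr
  exact cover.mul_mem (scalars_subset_cover hc) (cover.mul_mem
    (involutions_subset_cover baseInvolution_mem_involutions)
    (involutions_subset_cover (partners_subset_involutions b hb)))

end Cover

/-- The elements of the triple cover of order 12 or 15; they are the products of the triples of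
involutions on which the induction on the length starts. -/
def IsTripleProduct (g : Packed) : Prop := g ^ 4 ≠ 1 ∧ g ^ 5 ≠ 1 ∧ g ^ 6 ≠ 1

/-- The noncentral elements of the triple cover of order at most 5; they are products of two
involutions. -/
def IsPairProduct (g : Packed) : Prop := g ∉ scalars ∧ (g ^ 3 = 1 ∨ g ^ 4 = 1 ∨ g ^ 5 = 1)

/-- The elements of the triple cover that are neither central nor involutions; they are the products
of the ample words of length four. -/
def IsQuadrupleProduct (g : Packed) : Prop := g * g ≠ 1 ∧ g ∉ scalars

noncomputable instance : DecidablePred IsTripleProduct :=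
  fun _ => inferInstanceAs (Decidable (_ ∧ _))

noncomputable instance : DecidablePred IsPairProduct :=
  fun _ => inferInstanceAs (Decidable (_ ∧ _))

instance : DecidablePred IsQuadrupleProduct := fun _ => inferInstanceAs (Decidable (_ ∧ _))

/-- The results of applying one Hurwitz move to a word of involutions. -/
def braidMoves : List Packed → List (List Packed)
  | a :: b :: l => (b :: (b * a * b) :: l) :: (braidMoves (b :: l)).map (a :: ·)
  | _ => []

/-- The words reached from `w` by Hurwitz moves in `n` search steps. -/
def braidOrbit (n : ℕ) (w : List Packed) : List (List Packed) := explore braidMoves n [w] []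

/-- Involutions of the subgroup generated by `w`: those obtained from the letters of `w` by repeated
conjugation by letters and multiplication by commuting letters. -/
def reflections (w : List Packed) : List Packed :=
  explore (fun y => w.flatMap fun x =>
    (x * y * x) :: if x * y ≠ 1 ∧ (x * y) * (x * y) = 1 then [x * y] else []) 400 w []

section Computation

set_option maxRecDepth 100000

theorem isPairProduct_baseInvolution_mul : ∀ b ∈ partners,
    (baseInvolution * b) * (baseInvolution * b) ≠ 1 → IsPairProduct (baseInvolution * b) := by
  decide +kernel

theorem exists_mul_mem_involutions_of_isPairProduct : ∀ r ∈ representatives,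
    IsPairProduct r → ∃ x ∈ involutions, x * r ∈ involutions := by
  decide +kernel

theorem pair_mem_braidOrbit : ∀ b ∈ partners,
    (baseInvolution * b) * (baseInvolution * b) ≠ 1 → ∀ y ∈ involutions,
      (y * (baseInvolution * b)) * (y * (baseInvolution * b)) = 1 →
        [y, y * (baseInvolution * b)] ∈ braidOrbit 100 [baseInvolution, b] := by
  decide +kernel

theorem mem_involutions_of_mul_self : ∀ r ∈ representatives,
    r * r = 1 → r ≠ 1 → r ∈ involutions := by
  decide +kernel

theorem exists_triple_forall_head_mem_braidOrbit : ∀ r ∈ representatives, IsTripleProduct r →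
    ∃ x ∈ involutions, ∃ y ∈ involutions,
      ((y * (x * r)) * (y * (x * r)) = 1 ∧ y * (x * r) ≠ 1) ∧
        (∀ a ∈ involutions, (a * r) * (a * r) ≠ 1 ∧
          (IsPairProduct (a * r) → ∃ w ∈ braidOrbit 400 [x, y, y * (x * r)], w.head? = some a)) ∧
        ∀ t ∈ involutions, t ∈ reflections [x, y, y * (x * r)] := by
  decide +kernel

theorem exists_hub_length_four : ∀ r ∈ representatives, ∃ e ∈ involutions, ∀ a ∈ involutions,
    IsTripleProduct (a * r) → ∃ b ∈ involutions, IsTripleProduct (b * r) ∧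
      IsPairProduct (b * (a * r)) ∧ IsPairProduct (e * (b * r)) ∧ IsTripleProduct (e * r) := by
  decide +kernel

theorem exists_hub_length_five : ∀ r ∈ representatives, ∃ e ∈ involutions, ∀ a ∈ involutions,
    IsQuadrupleProduct (a * r) →
      ∃ b ∈ involutions, IsTripleProduct (b * (a * r)) ∧ IsTripleProduct (e * (b * r)) := by
  decide +kernel

theorem exists_hub_length_six : ∀ r ∈ representatives, ∃ e ∈ involutions, ∀ a ∈ involutions,
    a * r ≠ 1 →
      ∃ b ∈ involutions, IsQuadrupleProduct (b * (a * r)) ∧ IsQuadrupleProduct (e * (b * r)) := by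
  decide +kernel

theorem exists_hub_length_seven : ∀ r ∈ representatives, ∃ e ∈ involutions, ∀ a ∈ involutions,
    ∃ b ∈ involutions, b * (a * r) ≠ 1 ∧ e * (b * r) ≠ 1 := by
  decide +kernel

theorem isQuadrupleProduct_of_isTripleProduct_mul : ∀ r ∈ representatives, ∀ c ∈ involutions,
    IsTripleProduct (c * r) → IsQuadrupleProduct r := by
  decide +kernel

theorem exists_isTripleProduct_mul : ∀ r ∈ representatives, IsQuadrupleProduct r →
    ∃ c ∈ involutions, IsTripleProduct (c * r) := by
  decide +kernel

theorem exists_isQuadrupleProduct_mul : ∀ r ∈ representatives, r ≠ 1 →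
    ∃ c ∈ involutions, IsQuadrupleProduct (c * r) := by
  decide +kernel

theorem exists_mul_ne_one : ∀ r ∈ representatives, ∃ c ∈ involutions, c * r ≠ 1 := by
  decide +kernel

end Computation

/-- The set of involutions of the triple cover, from which the letters of words are taken. -/
abbrev involutionSet : Set Packed := {x | x ∈ involutions}

/-- The set of products that make a triple of involutions ample. -/
abbrev tripleProductSet : Set Packed := {g | IsTripleProduct g}

local notation "𝓣" => involutionSet

local notation "𝓐" => tripleProductSet

section Transitivity

variable {s g x y x' y' : Packed} {u v : List Packed} {n : ℕ}

theorem conj_mem_involutionSet : ∀ a ∈ 𝓣, ∀ b, a * b * a⁻¹ ∈ 𝓣 ↔ b ∈ 𝓣 :=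
  fun _ ha _ => conj_mem_involutions_iff (involutions_subset_cover ha)

theorem forall_mem_cover_of_representatives {p : Packed → Prop}
    (hconj : ∀ s ∈ cover, ∀ g, p g → p (s * g * s⁻¹)) (hp : ∀ r ∈ representatives, p r)
    (hg : g ∈ cover) : p g := by
  obtain ⟨s, hs, r, hr, rfl⟩ := exists_conj_representative hg
  exact hconj s hs r (hp r hr)

theorem isTripleProduct_conj_iff : IsTripleProduct (s * g * s⁻¹) ↔ IsTripleProduct g := by
  simp only [IsTripleProduct, conj_pow, ne_eq, conj_eq_one_iff]

theorem isPairProduct_conj_iff (hs : s ∈ cover) :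
    IsPairProduct (s * g * s⁻¹) ↔ IsPairProduct g := by
  simp only [IsPairProduct, conj_pow, conj_eq_one_iff, conj_mem_scalars_iff hs]

theorem isQuadrupleProduct_conj_iff (hs : s ∈ cover) :
    IsQuadrupleProduct (s * g * s⁻¹) ↔ IsQuadrupleProduct g := by
  simp only [IsQuadrupleProduct, conj_mul, ne_eq, conj_eq_one_iff, conj_mem_scalars_iff hs]

theorem prod_mem_cover (hu : ∀ x ∈ u, x ∈ 𝓣) : u.prod ∈ cover :=
  cover.list_prod_mem fun x hx => involutions_subset_cover (hu x hx)

theorem mem_cover_of_mem_ampleProducts (hg : g ∈ ampleProducts 𝓣 𝓐 n) : g ∈ cover := by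
  obtain ⟨u, hu, -, rfl⟩ := hg
  exact prod_mem_cover hu.1

theorem forall_mem_map_conj (hs : s ∈ cover) (hu : ∀ x ∈ u, x ∈ 𝓣) :
    ∀ x ∈ u.map (MulAut.conj s).toMonoidHom, x ∈ 𝓣 :=
  List.forall_mem_map.2 fun x hx => (conj_mem_involutions_iff hs).2 (hu x hx)

theorem ample_map_conj (hs : s ∈ cover) (hu : Ample 𝓣 𝓐 u) :
    Ample 𝓣 𝓐 (u.map (MulAut.conj s).toMonoidHom) :=
  hu.map (fun _ hx => (conj_mem_involutions_iff hs).2 hx) fun _ hx => isTripleProduct_conj_iff.2 hx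

theorem conj_mem_ampleProducts (hs : s ∈ cover) (hg : g ∈ ampleProducts 𝓣 𝓐 n) :
    s * g * s⁻¹ ∈ ampleProducts 𝓣 𝓐 n := by
  obtain ⟨u, hu, rfl, rfl⟩ := hg
  exact ⟨_, ample_map_conj hs hu, List.length_map _, prod_map_conj s u⟩

theorem braidTransitive_conj (hs : s ∈ cover) (hg : BraidTransitive 𝓣 𝓐 n g) :
    BraidTransitive 𝓣 𝓐 n (s * g * s⁻¹) := by
  intro u v hu hv hlu hlv hgu hgv
  have hs' := cover.inv_mem hs
  have h := (hg _ _ (ample_map_conj hs' hu) (ample_map_conj hs' hv) (by simpa) (by simpa)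
    (by rw [prod_map_conj, hgu]; simp [mul_assoc])
    (by rw [prod_map_conj, hgv]; simp [mul_assoc])).map
    (MulAut.conj s).toMonoidHom
  simpa [Function.comp_def, mul_assoc] using h

theorem braidTransitive_of_representatives
    (h : ∀ r ∈ representatives, BraidTransitive 𝓣 𝓐 n r) (g : Packed) :
    BraidTransitive 𝓣 𝓐 n g := by
  intro u v hu hv hlu hlv hgu hgv
  have hg : BraidTransitive 𝓣 𝓐 n g := forall_mem_cover_of_representatives
    (p := BraidTransitive 𝓣 𝓐 n) (fun _ hs _ => braidTransitive_conj hs) h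
    (hgu ▸ prod_mem_cover hu.1)
  exact hg u v hu hv hlu hlv hgu hgv

theorem braidEquiv_of_mem_braidMoves (hu : ∀ x ∈ u, x ∈ 𝓣) (hv : v ∈ braidMoves u) : u ∼ v := by
  induction u using braidMoves.induct generalizing v with
  | case1 a b l ih =>
    obtain ⟨ha, hbl⟩ := List.forall_mem_cons.1 hu
    rw [braidMoves, List.mem_cons, List.mem_map] at hv
    obtain rfl | ⟨w, hw, rfl⟩ := hv
    · simpa [inv_eq_self_of_mem_involutions (hbl b List.mem_cons_self)] using
        BraidEquiv.swap a b l
    · exact (ih hbl hw).cons a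
  | case2 l h => simp [braidMoves] at hv

theorem braidEquiv_of_mem_braidOrbit (hu : ∀ x ∈ u, x ∈ 𝓣) (hv : v ∈ braidOrbit n u) : u ∼ v := by
  refine forall_mem_explore (p := (u ∼ ·)) (fun w huw v hv => ?_) ?_ (by simp) v hv
  · exact huw.trans <|
      braidEquiv_of_mem_braidMoves ((huw.forall_mem_iff conj_mem_involutionSet).1 hu) hv
  · simpa using BraidEquiv.refl u

theorem mem_involutions_of_mul_self_eq_one (hg : g ∈ cover) (h : g * g = 1) (h1 : g ≠ 1) :
    g ∈ involutions := by
  obtain ⟨s, hs, r, hr, rfl⟩ := exists_conj_representative hg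
  rw [conj_mul, conj_eq_one_iff] at h
  rw [ne_eq, conj_eq_one_iff] at h1
  exact (conj_mem_involutions_iff hs).2 (mem_involutions_of_mul_self r hr h h1)

theorem exists_mul_eq_of_isPairProduct (hg : g ∈ cover) (h : IsPairProduct g) :
    ∃ x ∈ 𝓣, ∃ y ∈ 𝓣, x * y = g := by
  obtain ⟨s, hs, r, hr, rfl⟩ := exists_conj_representative hg
  obtain ⟨x, hx, hxr⟩ :=
    exists_mul_mem_involutions_of_isPairProduct r hr ((isPairProduct_conj_iff hs).1 h)
  refine ⟨s * x * s⁻¹, (conj_mem_involutions_iff hs).2 hx, s * (x * r) * s⁻¹,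
    (conj_mem_involutions_iff hs).2 hxr, ?_⟩
  rw [conj_mul, ← mul_assoc x, mul_self_of_mem_involutions hx, one_mul]

theorem isPairProduct_mul (hx : x ∈ 𝓣) (hy : y ∈ 𝓣) (h : (x * y) * (x * y) ≠ 1) :
    IsPairProduct (x * y) := by
  obtain ⟨s, hs, b, hb, rfl, rfl⟩ := exists_conj_pair hx hy
  rw [conj_mul] at h ⊢
  rw [conj_mul, ne_eq, conj_eq_one_iff] at h
  exact (isPairProduct_conj_iff hs).2 (isPairProduct_baseInvolution_mul b hb h)

theorem pair_braidEquiv (hx : x ∈ 𝓣) (hy : y ∈ 𝓣) (h : (x * y) * (x * y) ≠ 1) (hx' : x' ∈ 𝓣)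
    (hy' : y' ∈ 𝓣) (hxy : x' * y' = x * y) : [x, y] ∼ [x', y'] := by
  obtain ⟨s, hs, b, hb, rfl, rfl⟩ := exists_conj_pair hx hy
  obtain ⟨x', rfl⟩ : ∃ a, s * a * s⁻¹ = x' := ⟨s⁻¹ * x' * s, by simp [mul_assoc]⟩
  obtain ⟨y', rfl⟩ : ∃ a, s * a * s⁻¹ = y' := ⟨s⁻¹ * y' * s, by simp [mul_assoc]⟩
  rw [conj_mul, conj_mul, ne_eq, conj_eq_one_iff] at h
  rw [conj_mul, conj_mul] at hxy
  replace hxy := mul_left_cancel (mul_right_cancel hxy)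
  have hx' : x' ∈ 𝓣 := (conj_mem_involutions_iff hs).1 hx'
  have hy' : y' ∈ 𝓣 := (conj_mem_involutions_iff hs).1 hy'
  obtain rfl : y' = x' * (baseInvolution * b) := by
    rw [← hxy, ← mul_assoc, mul_self_of_mem_involutions hx', one_mul]
  have hbase : ∀ z ∈ [baseInvolution, b], z ∈ 𝓣 := by
    simp [baseInvolution_mem_involutions,
      partners_subset_involutions b hb]
  simpa using (braidEquiv_of_mem_braidOrbit hbase
    (pair_mem_braidOrbit b hb h x' hx' (mul_self_of_mem_involutions hy'))).map
    (MulAut.conj s).toMonoidHom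

theorem exists_triple_representative {r : Packed} (hr : r ∈ representatives)
    (h : IsTripleProduct r) : ∃ u, (∀ x ∈ u, x ∈ 𝓣) ∧ u.length = 3 ∧ u.prod = r ∧
      (∀ t ∈ involutions, t ∈ reflections u) ∧
      ∀ v, (∀ x ∈ v, x ∈ 𝓣) → v.length = 3 → v.prod = r → u ∼ v := by
  obtain ⟨x, hx, y, hy, ⟨hz, hz1⟩, horbit, hgen⟩ :=
    exists_triple_forall_head_mem_braidOrbit r hr h
  have hxx := mul_self_of_mem_involutions hx
  have hyy := mul_self_of_mem_involutions hy
  have hz : y * (x * r) ∈ 𝓣 := mem_involutions_of_mul_self_eq_one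
    (cover.mul_mem (involutions_subset_cover hy)
      (cover.mul_mem (involutions_subset_cover hx) (representatives_subset_cover hr))) hz hz1
  have hu : ∀ t ∈ [x, y, y * (x * r)], t ∈ 𝓣 := by simpa using ⟨hx, hy, hz⟩
  have hprod : [x, y, y * (x * r)].prod = r := by simp [← mul_assoc, hyy, hxx]
  refine ⟨_, hu, rfl, hprod, hgen, fun v hv hlv hgv => ?_⟩
  obtain ⟨a, b, c, rfl⟩ := List.length_eq_three.1 hlv
  obtain ⟨ha, hb, hc⟩ : a ∈ 𝓣 ∧ b ∈ 𝓣 ∧ c ∈ 𝓣 := by simpa using hv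
  have hbc : b * c = a * r := by
    simp [← hgv, ← mul_assoc, mul_self_of_mem_involutions ha]
  obtain ⟨hne, horbit⟩ := horbit a ha
  rw [← hbc] at hne horbit
  obtain ⟨w, hw, hhead⟩ := horbit (isPairProduct_mul hb hc hne)
  have huw := braidEquiv_of_mem_braidOrbit hu hw
  obtain ⟨a', b', c', rfl⟩ := List.length_eq_three.1 huw.length_eq.symm
  obtain rfl : a' = a := by simpa using hhead
  obtain ⟨-, hb', hc'⟩ : a' ∈ 𝓣 ∧ b' ∈ 𝓣 ∧ c' ∈ 𝓣 := by
    simpa using (huw.forall_mem_iff conj_mem_involutionSet).1 hu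
  have hbc' : b' * c' = b * c := by
    have := huw.prod_eq.symm.trans (hprod.trans hgv.symm)
    simpa using this
  exact huw.trans ((pair_braidEquiv hb hc hne hb' hc' hbc').symm.cons a')

theorem braidTransitive_three (g : Packed) : BraidTransitive 𝓣 𝓐 3 g := by
  refine braidTransitive_of_representatives (fun r hr u v hu hv hlu hlv hgu hgv => ?_) g
  obtain ⟨huT, huA⟩ := (ample_iff_of_length_eq_three hlu).1 hu
  obtain ⟨w, -, -, -, -, hw⟩ := exists_triple_representative hr (hgu ▸ huA)
  exact (hw u huT hlu hgu).symm.trans (hw v hv.1 hlv hgv)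

theorem mem_ampleProducts_three (hg : g ∈ cover) (h : IsTripleProduct g) :
    g ∈ ampleProducts 𝓣 𝓐 3 := by
  obtain ⟨s, hs, r, hr, rfl⟩ := exists_conj_representative hg
  rw [isTripleProduct_conj_iff] at h
  obtain ⟨u, hu, hlu, rfl, -⟩ := exists_triple_representative hr h
  exact conj_mem_ampleProducts hs ⟨u, (ample_iff_of_length_eq_three hlu).2 ⟨hu, h⟩, hlu, rfl⟩

theorem isTripleProduct_of_mem_ampleProducts (hg : g ∈ ampleProducts 𝓣 𝓐 3) :
    IsTripleProduct g := by
  obtain ⟨u, hu, hlu, rfl⟩ := hg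
  exact ((ample_iff_of_length_eq_three hlu).1 hu).2

theorem mem_ampleProducts_succ {P Q : Packed → Prop}
    (hP : ∀ s ∈ cover, ∀ g, P (s * g * s⁻¹) → P g)
    (hQ : ∀ g ∈ cover, Q g → g ∈ ampleProducts 𝓣 𝓐 n)
    (h : ∀ r ∈ representatives, P r → ∃ c ∈ involutions, Q (c * r)) (hg : g ∈ cover) (hPg : P g) :
    g ∈ ampleProducts 𝓣 𝓐 (n + 1) := by
  obtain ⟨s, hs, r, hr, rfl⟩ := exists_conj_representative hg
  obtain ⟨c, hc, hcr⟩ := h r hr (hP s hs r hPg)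
  have := mul_mem_ampleProducts (T := 𝓣) hc <| hQ _
    (cover.mul_mem (involutions_subset_cover hc) (representatives_subset_cover hr)) hcr
  rw [← mul_assoc, mul_self_of_mem_involutions hc, one_mul] at this
  exact conj_mem_ampleProducts hs this

theorem mem_ampleProducts_four (hg : g ∈ cover) (h : IsQuadrupleProduct g) :
    g ∈ ampleProducts 𝓣 𝓐 4 :=
  mem_ampleProducts_succ (fun _ hs _ => (isQuadrupleProduct_conj_iff hs).1)
    (fun _ => mem_ampleProducts_three) exists_isTripleProduct_mul hg h

theorem mem_ampleProducts_five (hg : g ∈ cover) (h : g ≠ 1) : g ∈ ampleProducts 𝓣 𝓐 5 :=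
  mem_ampleProducts_succ (fun _ _ _ => mt conj_eq_one_iff.2) (fun _ => mem_ampleProducts_four)
    exists_isQuadrupleProduct_mul hg h

theorem mem_ampleProducts_add_six (hg : g ∈ cover) (n : ℕ) : g ∈ ampleProducts 𝓣 𝓐 (n + 6) := by
  induction n generalizing g with
  | zero =>
    exact mem_ampleProducts_succ (P := fun _ => True) (fun _ _ _ h => h)
      (fun _ => mem_ampleProducts_five) (fun r hr _ => exists_mul_ne_one r hr) hg trivial
  | succ n ih =>
    exact mem_ampleProducts_succ (P := fun _ => True) (Q := fun _ => True) (fun _ _ _ h => h)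
      (fun _ hg _ => ih hg) (fun r hr _ => (exists_mul_ne_one r hr).imp fun _ h => ⟨h.1, trivial⟩)
      hg trivial

theorem isQuadrupleProduct_of_mem_ampleProducts (hg : g ∈ ampleProducts 𝓣 𝓐 4) :
    IsQuadrupleProduct g := by
  obtain ⟨s, hs, r, hr, rfl⟩ := exists_conj_representative (mem_cover_of_mem_ampleProducts hg)
  have hr' : r ∈ ampleProducts 𝓣 𝓐 4 := by
    simpa [mul_assoc] using conj_mem_ampleProducts (cover.inv_mem hs) hg
  obtain ⟨c, hc, h, hh, rfl⟩ := exists_mul_of_mem_ampleProducts conj_mem_involutionSet le_rfl hr'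
  refine (isQuadrupleProduct_conj_iff hs).2
    (isQuadrupleProduct_of_isTripleProduct_mul _ hr c hc ?_)
  rw [← mul_assoc, mul_self_of_mem_involutions hc, one_mul]
  exact isTripleProduct_of_mem_ampleProducts hh

theorem ne_one_of_mem_ampleProducts_five (hg : g ∈ ampleProducts 𝓣 𝓐 5) : g ≠ 1 := by
  obtain ⟨c, hc, h, hh, rfl⟩ :=
    exists_mul_of_mem_ampleProducts conj_mem_involutionSet (by norm_num) hg
  intro hch
  obtain rfl : h = c := by
    rw [← inv_eq_self_of_mem_involutions hc, ← inv_eq_of_mul_eq_one_right hch]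
  exact (isQuadrupleProduct_of_mem_ampleProducts hh).1 hch

theorem braidTransitive_four (g : Packed) : BraidTransitive 𝓣 𝓐 4 g := by
  refine braidTransitive_of_representatives (fun r hr => ?_) g
  obtain ⟨e, he, hub⟩ := exists_hub_length_four r hr
  have bridge {a b : Packed} (ha : a ∈ involutions) (hb : b ∈ involutions)
      (hba : IsPairProduct (b * (a * r))) (har : IsTripleProduct (a * r))
      (hbr : IsTripleProduct (b * r)) : Bridge 𝓣 𝓐 3 r a b := by
    obtain ⟨x, hx, y, hy, hxy⟩ := exists_mul_eq_of_isPairProduct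
      (cover.mul_mem (involutions_subset_cover hb)
        (cover.mul_mem (involutions_subset_cover ha) (representatives_subset_cover hr))) hba
    refine .of_pair conj_mem_involutionSet ha hb hx hy ?_ ?_ ?_
    · rw [mul_assoc, hxy, mul_assoc, ← mul_assoc b b, mul_self_of_mem_involutions hb, one_mul,
        ← mul_assoc, mul_self_of_mem_involutions ha, one_mul]
    · rwa [inv_eq_self_of_mem_involutions ha]
    · rwa [inv_eq_self_of_mem_involutions hb]
  refine .succ conj_mem_involutionSet le_rfl braidTransitive_three (e := e) fun a ha har => ?_
  rw [inv_eq_self_of_mem_involutions ha] at har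
  have har := isTripleProduct_of_mem_ampleProducts har
  obtain ⟨b, hb, hbr, hba, heb, her⟩ := hub a ha har
  exact ⟨b, bridge ha hb hba har hbr, bridge hb he heb hbr her⟩

theorem braidTransitive_add_two {P Q : Packed → Prop} (hn : 2 ≤ n)
    (hP : ∀ g ∈ ampleProducts 𝓣 𝓐 (n + 1), P g)
    (hQ : ∀ g ∈ cover, Q g → g ∈ ampleProducts 𝓣 𝓐 n)
    (hub : ∀ r ∈ representatives, ∃ e ∈ involutions, ∀ a ∈ involutions, P (a * r) →
      ∃ b ∈ involutions, Q (b * (a * r)) ∧ Q (e * (b * r)))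
    (ih : ∀ g, BraidTransitive 𝓣 𝓐 (n + 1) g) (g : Packed) : BraidTransitive 𝓣 𝓐 (n + 2) g := by
  refine braidTransitive_of_representatives (fun r hr => ?_) g
  obtain ⟨e, he, hub⟩ := hub r hr
  have bridge {a b : Packed} (ha : a ∈ involutions) (hb : b ∈ involutions)
      (h : Q (b * (a * r))) : Bridge 𝓣 𝓐 (n + 1) r a b := by
    refine .of_mem_ampleProducts conj_mem_involutionSet ha hb ?_
    rw [inv_eq_self_of_mem_involutions ha, inv_eq_self_of_mem_involutions hb, mul_assoc]
    exact hQ _ (cover.mul_mem (involutions_subset_cover hb)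
      (cover.mul_mem (involutions_subset_cover ha) (representatives_subset_cover hr))) h
  refine .succ conj_mem_involutionSet (by omega) ih (e := e) fun a ha har => ?_
  rw [inv_eq_self_of_mem_involutions ha] at har
  obtain ⟨b, hb, hba, heb⟩ := hub a ha (hP _ har)
  exact ⟨b, bridge ha hb hba, bridge hb he heb⟩

theorem braidTransitive_add_three (n : ℕ) (g : Packed) : BraidTransitive 𝓣 𝓐 (n + 3) g := by
  induction n using Nat.strong_induction_on generalizing g with
  | h n ih =>
    match n with
    | 0 => exact braidTransitive_three g
    | 1 => exact braidTransitive_four g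
    | 2 =>
      exact braidTransitive_add_two (by norm_num) (fun _ => isQuadrupleProduct_of_mem_ampleProducts)
        (fun _ => mem_ampleProducts_three) exists_hub_length_five (ih 1 (by norm_num)) g
    | 3 =>
      exact braidTransitive_add_two (by norm_num) (fun _ => ne_one_of_mem_ampleProducts_five)
        (fun _ => mem_ampleProducts_four) exists_hub_length_six (ih 2 (by norm_num)) g
    | 4 =>
      exact braidTransitive_add_two (P := fun _ => True) (by norm_num) (fun _ _ => trivial)
        (fun _ => mem_ampleProducts_five)
        (fun r hr => (exists_hub_length_seven r hr).imp fun _ h => ⟨h.1, fun a ha _ => h.2 a ha⟩)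
        (ih 3 (by norm_num)) g
    | n + 5 =>
      have ht := baseInvolution_mem_involutions
      exact braidTransitive_add_two (P := fun _ => True) (Q := fun _ => True) (by omega)
        (fun _ _ => trivial) (fun _ hg _ => mem_ampleProducts_add_six hg n)
        (fun _ _ => ⟨_, ht, fun _ _ _ => ⟨_, ht, trivial, trivial⟩⟩) (ih (n + 4) (by omega)) g

end Transitivity

section Generation

/-- A certificate that the words in `w` generate a proper subgroup: the involutions found by
`reflections` are stable under conjugation by the letters, and not all involutions are found. -/
def IsProper (w : List Packed) : Prop :=
  (∀ x ∈ w, x ∈ reflections w ∧ ∀ y ∈ reflections w, x * y * x ∈ reflections w) ∧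
    ∃ t ∈ involutions, t ∉ reflections w

instance : DecidablePred IsProper := fun _ => inferInstanceAs (Decidable (_ ∧ _))

section Computation

set_option maxRecDepth 100000

theorem exists_mul_baseInvolution_ne :
    ∃ b ∈ involutions, b * baseInvolution ≠ baseInvolution * b := by
  decide +kernel

theorem exists_isTripleProduct_of_not_commute : ∀ b ∈ partners,
    b * baseInvolution ≠ baseInvolution * b → IsProper [b, baseInvolution] ∧
      ∀ d ∈ involutions, d ∈ reflections [b, baseInvolution] ∨
        IsTripleProduct (d * (b * baseInvolution)) ∨
        IsProper [d, b, baseInvolution] ∧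
          ∀ e ∈ involutions, e ∈ reflections [d, b, baseInvolution] ∨
            ∃ w ∈ braidOrbit 10 [d, b, baseInvolution], IsTripleProduct (e * w.tail.prod) := by
  decide +kernel

end Computation

/-- The letters of `u` generate a subgroup containing the triple cover. -/
def Generates (u : List Packed) : Prop := cover ≤ Subgroup.closure {x | x ∈ u}

variable {s b y : Packed} {u v w : List Packed}

theorem Generates.le (hu : Generates u) {H : Subgroup Packed} (hH : ∀ x ∈ u, x ∈ H) : cover ≤ H :=
  hu.trans ((Subgroup.closure_le H).2 hH)

theorem generates_of_involutions_subset
    (h : ∀ t ∈ involutions, t ∈ Subgroup.closure {x | x ∈ u}) : Generates u := by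
  rw [Generates, ← closure_involutions]
  exact (Subgroup.closure_le _).2 h

theorem Generates.mono (hu : Generates u) (h : u ⊆ v) : Generates v :=
  hu.trans (Subgroup.closure_mono fun _ => @h _)

theorem Generates.of_braidEquiv (hu : Generates u) (h : u ∼ v) : Generates v :=
  hu.le ((h.forall_mem_subgroup_iff _).2 fun _ hx => Subgroup.subset_closure hx)

theorem Generates.map_conj (hu : Generates u) (hs : s ∈ cover) :
    Generates (u.map (MulAut.conj s).toMonoidHom) := by
  intro g hg
  have hg' : s⁻¹ * g * s ∈ cover := cover.mul_mem (cover.mul_mem (cover.inv_mem hs) hg) hs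
  have := hu.le (H := (Subgroup.closure {x | x ∈ u.map (MulAut.conj s).toMonoidHom}).comap
    (MulAut.conj s).toMonoidHom)
    (fun x hx => Subgroup.subset_closure (List.mem_map_of_mem hx)) hg'
  simpa [mul_assoc] using this

theorem Generates.ne_nil (hu : Generates u) : u ≠ [] := by
  rintro rfl
  exact baseInvolution_ne_one <| Subgroup.mem_bot.1 <|
    hu.le (H := ⊥) (by simp) (involutions_subset_cover baseInvolution_mem_involutions)

theorem reflections_subset_closure (hy : y ∈ reflections w) :
    y ∈ Subgroup.closure {x | x ∈ w} := by
  refine forall_mem_explore (p := (· ∈ Subgroup.closure {x | x ∈ w})) (fun y hy z hz => ?_)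
    (fun _ hx => Subgroup.subset_closure hx) (by simp) y hy
  obtain ⟨x, hx, hz⟩ := List.mem_flatMap.1 hz
  have hx := Subgroup.subset_closure (k := {x | x ∈ w}) hx
  have hxy := Subgroup.mul_mem _ hx hy
  obtain rfl | hz := List.mem_cons.1 hz
  · exact Subgroup.mul_mem _ hxy hx
  · split_ifs at hz
    · exact List.mem_singleton.1 hz ▸ hxy
    · simp at hz

theorem IsProper.not_generates (hw : ∀ x ∈ w, x ∈ 𝓣) (h : IsProper w) : ¬ Generates w := by
  intro hgen
  obtain ⟨hstable, t, ht, htw⟩ := h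
  have hconj : ∀ s ∈ Subgroup.closure {x | x ∈ w}, ∀ y ∈ reflections w,
      s * y * s⁻¹ ∈ reflections w := by
    intro s hs
    have hletter (x : Packed) (hx : x ∈ w) (y : Packed) (hy : y ∈ reflections w) :
        x * y * x⁻¹ ∈ reflections w := by
      rw [inv_eq_self_of_mem_involutions (hw x hx)]
      exact (hstable x hx).2 y hy
    induction hs using Subgroup.closure_induction'' with
    | mem x hx => exact hletter x hx
    | inv_mem x hx =>
      rw [inv_eq_self_of_mem_involutions (hw x hx)]
      exact hletter x hx
    | one => simp
    | mul s t _ _ ihs iht =>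
      intro y hy
      simpa [mul_assoc] using ihs _ (iht y hy)
  obtain ⟨x, hx⟩ := List.exists_mem_of_ne_nil w hgen.ne_nil
  obtain ⟨s, hs, rfl⟩ := exists_conj_baseInvolution (hw x hx)
  obtain ⟨s', hs', rfl⟩ := exists_conj_baseInvolution ht
  refine htw ?_
  have := hconj (s' * s⁻¹) (hgen (cover.mul_mem hs' (cover.inv_mem hs))) _ (hstable _ hx).1
  simpa [mul_assoc] using this

theorem Generates.exists_append_not_commute (hu : ∀ x ∈ u, x ∈ 𝓣) (hgen : Generates u) :
    ∃ v, ∃ b ∈ 𝓣, ∃ t ∈ 𝓣, u ∼ v ++ [b, t] ∧ b * t ≠ t * b := by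
  obtain ⟨v, t, rfl⟩ := List.eq_nil_or_concat u |>.resolve_left hgen.ne_nil
  have ht : t ∈ 𝓣 := hu t (by simp)
  have hcomm : ¬ ∀ x ∈ v ++ [t], x ∈ Subgroup.centralizer {t} := by
    intro h
    obtain ⟨s, hs, rfl⟩ := exists_conj_baseInvolution ht
    obtain ⟨b, hb, hne⟩ := exists_mul_baseInvolution_ne
    have := Subgroup.mem_centralizer_singleton_iff.1 <| hgen.le (by simpa using h) <|
      cover.mul_mem (cover.mul_mem hs (involutions_subset_cover hb)) (cover.inv_mem hs)
    rw [conj_mul, conj_mul] at this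
    exact hne (mul_left_cancel (mul_right_cancel this))
  obtain ⟨v', b, hb, huv⟩ := BraidEquiv.exists_append_cons_not_mem
    (by simpa using Subgroup.mem_centralizer_singleton_iff.2 rfl) hcomm
  rw [List.concat_eq_append] at hu ⊢
  have hb' : b ∈ 𝓣 := (huv.forall_mem_iff conj_mem_involutionSet).1 hu b (by simp)
  exact ⟨v', b, hb', t, ht, huv, fun h => hb (Subgroup.mem_centralizer_singleton_iff.2 h)⟩

theorem IsProper.exists_append_cons (hvw : ∀ x ∈ v ++ w, x ∈ 𝓣) (hw : IsProper w)
    (hgen : Generates (v ++ w)) : ∃ v', ∃ d ∈ 𝓣, d ∉ reflections w ∧ v ++ w ∼ v' ++ d :: w := by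
  have hwT : ∀ x ∈ w, x ∈ 𝓣 := fun x hx => hvw x (List.mem_append_right v hx)
  obtain ⟨v', d, hd, h⟩ := BraidEquiv.exists_append_cons_not_mem
    (H := Subgroup.closure {x | x ∈ w}) (fun x hx => Subgroup.subset_closure hx)
    fun h => hw.not_generates hwT (hgen.le h)
  exact ⟨v', d, (h.forall_mem_iff conj_mem_involutionSet).1 hvw d (by simp),
    mt reflections_subset_closure hd, h⟩

theorem Generates.ample_append (hb : b ∈ partners)
    (hne : b * baseInvolution ≠ baseInvolution * b) (hv : ∀ x ∈ v, x ∈ 𝓣)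
    (hgen : Generates (v ++ [b, baseInvolution])) : Ample 𝓣 𝓐 (v ++ [b, baseInvolution]) := by
  have hT : ∀ x ∈ v ++ [b, baseInvolution], x ∈ 𝓣 := List.forall_mem_append.2
    ⟨hv, by simpa using ⟨partners_subset_involutions b hb, baseInvolution_mem_involutions⟩⟩
  obtain ⟨hproper, hcheck⟩ := exists_isTripleProduct_of_not_commute b hb hne
  obtain ⟨v₁, d, hd, hdr, h₁⟩ := hproper.exists_append_cons hT hgen
  obtain hdr' | htriple | ⟨hproper', hcheck⟩ := hcheck d hd
  · exact absurd hdr' hdr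
  · exact ⟨hT, v₁, _, h₁, rfl, by simpa using htriple⟩
  have hT₁ := (h₁.forall_mem_iff conj_mem_involutionSet).1 hT
  obtain ⟨v₂, e, he, her, h₂⟩ := hproper'.exists_append_cons hT₁ (hgen.of_braidEquiv h₁)
  obtain ⟨w, hw, htriple⟩ := (hcheck e he).resolve_left her
  have h₃ := braidEquiv_of_mem_braidOrbit
    (fun x hx => hT₁ x (List.mem_append_right v₁ hx)) hw
  obtain ⟨x, p, q, rfl⟩ := List.length_eq_three.1 h₃.length_eq.symm
  refine ⟨hT, v₂ ++ [e * x * e⁻¹], [e, p, q], ?_, rfl, by simpa using htriple⟩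
  calc v ++ [b, baseInvolution] ∼ v₂ ++ [e, d, b, baseInvolution] := h₁.trans h₂
    _ ∼ v₂ ++ [e, x, p, q] := (h₃.cons e).append_left v₂
    _ ∼ v₂ ++ [e * x * e⁻¹, e, p, q] := (BraidEquiv.swap_back e x [p, q]).append_left v₂
    _ = _ := by simp

theorem Generates.ample (hu : ∀ x ∈ u, x ∈ 𝓣) (hgen : Generates u) : Ample 𝓣 𝓐 u := by
  obtain ⟨v, b, hb, t, ht, huv, hne⟩ := hgen.exists_append_not_commute hu
  have hv := (huv.forall_mem_iff conj_mem_involutionSet).1 hu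
  refine .of_braidEquiv conj_mem_involutionSet ?_ huv.symm
  obtain ⟨s, hs, b, hb', rfl, rfl⟩ := exists_conj_pair ht hb
  rw [conj_mul, conj_mul] at hne
  have hgen' := (hgen.of_braidEquiv huv).map_conj (cover.inv_mem hs)
  have hw := ample_map_conj hs <| Generates.ample_append (v := v.map (MulAut.conj s⁻¹).toMonoidHom)
    hb' (fun h => hne (by rw [h]))
    (forall_mem_map_conj (cover.inv_mem hs) fun x hx => hv x (List.mem_append_left _ hx))
    (by simpa [mul_assoc] using hgen')
  simpa [Function.comp_def, mul_assoc] using hw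

theorem generates_of_ample (hu : Ample 𝓣 𝓐 u) : Generates u := by
  obtain ⟨huT, v, w, huv, hlw, hwA⟩ := hu
  have hwT : ∀ x ∈ w, x ∈ 𝓣 := fun x hx =>
    (huv.forall_mem_iff conj_mem_involutionSet).1 huT x (List.mem_append_right v hx)
  obtain ⟨s, hs, r, hr, hsr⟩ := exists_conj_representative (prod_mem_cover hwT)
  have hr' : IsTripleProduct r := isTripleProduct_conj_iff.1 (hsr ▸ hwA)
  obtain ⟨w₀, -, -, -, hgen, hw₀⟩ := exists_triple_representative hr hr'
  have hw₀w := hw₀ _ (forall_mem_map_conj (cover.inv_mem hs) hwT) (by simpa)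
    (by rw [prod_map_conj, ← hsr]; simp [mul_assoc])
  have hw₀gen : Generates w₀ :=
    generates_of_involutions_subset fun t ht => reflections_subset_closure (hgen t ht)
  have hwgen : Generates w := by
    simpa [Function.comp_def, mul_assoc] using (hw₀gen.of_braidEquiv hw₀w).map_conj hs
  exact (hwgen.mono (List.subset_append_right v w)).of_braidEquiv huv.symm

end Generation

section Projection

section Computation

set_option maxRecDepth 100000

theorem mem_scalars_of_forall_div_eq : ∀ r ∈ representatives,
    (∀ i : Fin 6, r.1 / 18 ^ (i : ℕ) % 18 / 3 = i) → r ∈ scalars := by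
  decide +kernel

theorem pow_three_of_mem_scalars : ∀ c ∈ scalars, c ^ 3 = 1 := by decide +kernel

theorem nodup_scalars : scalars.Nodup := by decide +kernel

end Computation

variable {s x y c g : Packed}

theorem toPerm_doubleSwap (a b c d : Fin 6) (i j : ZMod 3) :
    toPerm (doubleSwap a b i c d j) = Equiv.swap a b * Equiv.swap c d :=
  toPerm_of _

theorem toPerm_of_mem_scalars (hc : c ∈ scalars) : toPerm c = 1 := by
  have h : toPerm scalar = 1 := toPerm_of _
  obtain rfl | rfl | rfl : c = 1 ∨ c = scalar ∨ c = scalar * scalar := by simpa [scalars] using hc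
  · exact map_one _
  · exact h
  · simp [h]

theorem mem_scalars_of_toPerm_eq_one (hg : g ∈ cover) (h : toPerm g = 1) : g ∈ scalars := by
  obtain ⟨s, hs, r, hr, rfl⟩ := exists_conj_representative hg
  have hr1 : toPerm r = 1 := by simpa using h
  refine (conj_mem_scalars_iff hs).2 (mem_scalars_of_forall_div_eq r hr fun i => ?_)
  rw [← toPerm_apply, hr1, Equiv.Perm.one_apply]

theorem eq_one_of_mul_self_eq_one (hc : c ∈ scalars) (h : c * c = 1) : c = 1 := by
  simpa [pow_succ, h] using pow_three_of_mem_scalars c hc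

theorem toPerm_injOn_involutions : Set.InjOn toPerm {x | x ∈ involutions} := by
  intro x hx y hy hxy
  have hxx := mul_self_of_mem_involutions hx
  have hyy := mul_self_of_mem_involutions hy
  have hc : x * y ∈ scalars := mem_scalars_of_toPerm_eq_one
    (cover.mul_mem (involutions_subset_cover hx) (involutions_subset_cover hy))
    (by rw [map_mul, ← hxy, ← map_mul, hxx, map_one])
  have hsq : (x * y) * (x * y) = 1 := by
    rw [← mul_assoc, (scalar_commute hc (involutions_subset_cover hx)).eq, ← mul_assoc, hxx,
      one_mul, hyy]
  have h := eq_one_of_mul_self_eq_one hc hsq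
  rw [← inv_eq_self_of_mem_involutions hy, eq_inv_of_mul_eq_one_left h]

theorem toPerm_mem_alternatingGroup (hx : x ∈ involutions) :
    toPerm x ∈ alternatingGroup (Fin 6) := by
  obtain ⟨s, -, rfl⟩ := exists_conj_baseInvolution hx
  simp only [map_mul, map_inv]
  refine (inferInstance : (alternatingGroup (Fin 6)).Normal).conj_mem _ ?_ _
  rw [baseInvolution, toPerm_doubleSwap, Equiv.Perm.mem_alternatingGroup]
  decide

theorem orderOf_toPerm (hx : x ∈ involutions) : orderOf (toPerm x) = 2 := by
  refine orderOf_eq_prime (by simp [pow_two, ← map_mul, mul_self_of_mem_involutions hx])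
    fun h => ?_
  have hc := mem_scalars_of_toPerm_eq_one (involutions_subset_cover hx) h
  exact ne_one_of_mem_involutions hx
    (eq_one_of_mul_self_eq_one hc (mul_self_of_mem_involutions hx))

theorem image_toPerm_involutions :
    involutions.toFinset.image toPerm =
      Finset.univ.filter fun σ : Equiv.Perm (Fin 6) => σ.cycleType = {2, 2} := by
  refine Finset.eq_of_subset_of_card_le (fun σ hσ => ?_) ?_
  · obtain ⟨x, hx, rfl⟩ := Finset.mem_image.1 hσ
    rw [List.mem_toFinset] at hx
    exact Finset.mem_filter.2 ⟨Finset.mem_univ _, (cycleType_eq_two_two_iff (by simp)).2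
      ⟨toPerm_mem_alternatingGroup hx, orderOf_toPerm hx⟩⟩
  · rw [Finset.card_image_of_injOn (by simpa using toPerm_injOn_involutions),
      List.toFinset_card_of_nodup nodup_involutions, length_involutions,
      Equiv.Perm.card_of_cycleType]
    decide

theorem exists_toPerm_eq {σ : Equiv.Perm (Fin 6)} (hσ : σ ∈ alternatingGroup (Fin 6))
    (h : orderOf σ = 2) : ∃ x ∈ involutions, toPerm x = σ := by
  have hmem : σ ∈ involutions.toFinset.image toPerm := by
    rw [image_toPerm_involutions]
    exact Finset.mem_filter.2 ⟨Finset.mem_univ _, (cycleType_eq_two_two_iff (by simp)).2 ⟨hσ, h⟩⟩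
  simpa using hmem

theorem map_toPerm_cover : cover.map toPerm = alternatingGroup (Fin 6) := by
  rw [← closure_involutions, MonoidHom.map_closure,
    ← Equiv.Perm.closure_cycleType_eq_two_two_eq_alternatingGroup (by simp)]
  congr 1
  ext σ
  simpa using Finset.ext_iff.1 image_toPerm_involutions σ

end Projection

section LiftingInvariant

variable {c c' : Packed} {u v : List Packed} {k : ℕ} {g h : Fin k → Equiv.Perm (Fin 6)}

theorem generates_iff_closure_range (hu : ∀ x ∈ u, x ∈ 𝓣) (hug : u.map toPerm = List.ofFn g) :
    Generates u ↔ Subgroup.closure (Set.range g) = alternatingGroup (Fin 6) := by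
  have hK : Subgroup.closure {x | x ∈ u} ≤ cover :=
    (Subgroup.closure_le _).2 fun x hx => involutions_subset_cover (hu x hx)
  have hrange : Set.range g = toPerm '' {x | x ∈ u} := by
    ext σ
    rw [← List.mem_ofFn', ← hug, List.mem_map]
    rfl
  rw [hrange, ← MonoidHom.map_closure, ← map_toPerm_cover]
  refine ⟨fun hgen => congrArg _ (hK.antisymm hgen), fun h => ?_⟩
  refine generates_of_involutions_subset fun t ht => ?_
  obtain ⟨s, hs, hst⟩ : toPerm t ∈ (Subgroup.closure {x | x ∈ u}).map toPerm :=
    h ▸ Subgroup.mem_map_of_mem _ (involutions_subset_cover ht)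
  have hc : s⁻¹ * t ∈ scalars := mem_scalars_of_toPerm_eq_one
    (cover.mul_mem (cover.inv_mem (hK hs)) (involutions_subset_cover ht)) (by simp [hst])
  have hpow : s ^ 3 = t := by
    calc s ^ 3 = s ^ 3 * (s⁻¹ * t) ^ 3 := by rw [pow_three_of_mem_scalars _ hc, mul_one]
      _ = (s * (s⁻¹ * t)) ^ 3 := ((scalar_commute hc (hK hs)).symm.mul_pow 3).symm
      _ = t := by
        rw [mul_inv_cancel_left, pow_succ, pow_two, mul_self_of_mem_involutions ht, one_mul]
  exact hpow ▸ Subgroup.pow_mem _ hs 3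

theorem map_toPerm_injOn : Set.InjOn (List.map toPerm) {u | ∀ x ∈ u, x ∈ 𝓣} := by
  refine Set.LeftInvOn.injOn (f₁' := List.map (Function.invFunOn toPerm 𝓣)) fun u hu => ?_
  rw [List.map_map]
  exact (List.map_congr_left fun x hx =>
    toPerm_injOn_involutions.leftInvOn_invFunOn (hu x hx)).trans (List.map_id u)

/-- The lifting invariant of `g` is `c`: the entries of `g` lift to involutions of the triple cover
whose product is `c`. -/
def HasLiftingInvariant (c : Packed) (g : Fin k → Equiv.Perm (Fin 6)) : Prop :=
  ∃ u : List Packed, (∀ x ∈ u, x ∈ 𝓣) ∧ u.map toPerm = List.ofFn g ∧ u.prod = c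

namespace HasLiftingInvariant

theorem unique (hc : HasLiftingInvariant c g) (hc' : HasLiftingInvariant c' g) : c = c' := by
  obtain ⟨u, hu, hug, rfl⟩ := hc
  obtain ⟨v, hv, hvg, rfl⟩ := hc'
  rw [map_toPerm_injOn hu hv (hug.trans hvg.symm)]

theorem iff_of_hurwitzMove (hgh : HurwitzMove g h) :
    HasLiftingInvariant c g ↔ HasLiftingInvariant c h := by
  have lift {g h : Fin k → Equiv.Perm (Fin 6)} (hgh : List.ofFn g ∼ List.ofFn h) :
      HasLiftingInvariant c g → HasLiftingInvariant c h := by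
    rintro ⟨u, hu, hug, rfl⟩
    obtain ⟨v, huv, hvh⟩ := BraidEquiv.exists_lift toPerm (hug ▸ hgh)
    exact ⟨v, (huv.forall_mem_iff conj_mem_involutionSet).1 hu, hvh, huv.prod_eq.symm⟩
  have hmove := BraidEquiv.of_move hgh.braidMove
  exact ⟨lift hmove, lift hmove.symm⟩

theorem conj (hc : c ∈ scalars) {σ : Equiv.Perm (Fin 6)} (hσ : σ ∈ alternatingGroup (Fin 6)) :
    HasLiftingInvariant c g → HasLiftingInvariant c fun i => σ * g i * σ⁻¹ := by
  rintro ⟨u, hu, hug, rfl⟩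
  obtain ⟨s, hs, rfl⟩ : σ ∈ cover.map toPerm := map_toPerm_cover ▸ hσ
  refine ⟨_, forall_mem_map_conj hs hu, ?_, ?_⟩
  · have := congrArg (List.map (MulAut.conj (toPerm s))) hug
    simpa [Function.comp_def] using this
  · rw [prod_map_conj, ← (scalar_commute hc hs).eq, mul_inv_cancel_right]

theorem iff_of_innerRel (hc : c ∈ scalars) (hgh : InnerRel k g h) :
    HasLiftingInvariant c g ↔ HasLiftingInvariant c h := by
  obtain hgh | ⟨σ, hσ, rfl⟩ := hgh
  · exact iff_of_hurwitzMove hgh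
  · exact ⟨fun hg => by simpa using hg.conj hc (inv_mem hσ),
      fun hg => by simpa [mul_assoc] using hg.conj hc hσ⟩

theorem iff_of_eqvGen (hc : c ∈ scalars) (hgh : Relation.EqvGen (InnerRel k) g h) :
    HasLiftingInvariant c g ↔ HasLiftingInvariant c h := by
  induction hgh with
  | rel _ _ h => exact iff_of_innerRel hc h
  | refl => rfl
  | symm _ _ _ ih => exact ih.symm
  | trans _ _ _ _ _ ih₁ ih₂ => exact ih₁.trans ih₂

theorem exists_of_mem_nielsenSet (hg : g ∈ NielsenSet k) :
    ∃ c ∈ scalars, HasLiftingInvariant c g := by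
  obtain ⟨hgA, hg2, hprod, -⟩ := hg
  choose x hx hxg using fun i => exists_toPerm_eq (hgA i) (hg2 i)
  have hxT : ∀ y ∈ List.ofFn x, y ∈ 𝓣 := List.forall_mem_ofFn_iff.2 hx
  have hmap : (List.ofFn x).map toPerm = List.ofFn g := by
    rw [List.map_ofFn]
    exact congrArg List.ofFn (funext hxg)
  exact ⟨_, mem_scalars_of_toPerm_eq_one (prod_mem_cover hxT) (by rw [map_list_prod, hmap, hprod]),
    _, hxT, hmap, rfl⟩

theorem hurwitzEquiv (hk : 3 ≤ k) (hg : g ∈ NielsenSet k) (hh : h ∈ NielsenSet k)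
    (hcg : HasLiftingInvariant c g) (hch : HasLiftingInvariant c h) : HurwitzEquiv g h := by
  obtain ⟨u, hu, hug, hprod⟩ := hcg
  obtain ⟨v, hv, hvh, hprod'⟩ := hch
  obtain ⟨n, rfl⟩ := Nat.exists_eq_add_of_le' hk
  have huv := braidTransitive_add_three n c u v
    (Generates.ample hu ((generates_iff_closure_range hu hug).2 hg.2.2.2))
    (Generates.ample hv ((generates_iff_closure_range hv hvh).2 hh.2.2.2))
    (by simpa using congrArg List.length hug) (by simpa using congrArg List.length hvh) hprod hprod'
  exact (huv.map toPerm).hurwitzEquiv hug.symm hvh.symm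

theorem exists_nielsenSet (hk : 6 ≤ k) (hc : c ∈ scalars) :
    ∃ g ∈ NielsenSet k, HasLiftingInvariant c g := by
  obtain ⟨n, rfl⟩ := Nat.exists_eq_add_of_le' hk
  obtain ⟨u, hu, hlu, rfl⟩ := mem_ampleProducts_add_six (scalars_subset_cover hc) n
  rw [← hlu]
  have hmap : u.map toPerm = List.ofFn (toPerm ∘ u.get) := by rw [← List.map_ofFn, List.ofFn_get]
  have hT (i) : u.get i ∈ involutions := hu.1 _ (u.get_mem i)
  refine ⟨toPerm ∘ u.get, ⟨fun i => toPerm_mem_alternatingGroup (hT i),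
    fun i => orderOf_toPerm (hT i), ?_,
    (generates_iff_closure_range hu.1 hmap).1 (generates_of_ample hu)⟩, u, hu.1, hmap, rfl⟩
  rw [← hmap, ← map_list_prod, toPerm_of_mem_scalars hc]

end HasLiftingInvariant

theorem card_scalars : Nat.card {c // c ∈ scalars} = 3 := by
  have hlen : scalars.length = 3 := rfl
  simpa [← List.mem_toFinset, hlen] using List.toFinset_card_of_nodup nodup_scalars

end LiftingInvariant

end Packed

/-- For every `k ≥ 6`, the quotient of `Ni(A₆, C_{2×2}^k)` by the equivalence
relation generated by Hurwitz moves and simultaneous conjugation by a single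
element of `A₆` (the inner action) has exactly three equivalence classes. -/
theorem stmt_2 (k : ℕ) (hk : 6 ≤ k) :
    Nat.card (Quotient ((Relation.EqvGen.setoid (InnerRel k)).comap
      (Subtype.val : ↥(NielsenSet k) → (Fin k → Equiv.Perm (Fin 6))))) = 3 := by
  choose inv hinv hlift using fun g : NielsenSet k =>
    Packed.HasLiftingInvariant.exists_of_mem_nielsenSet g.2
  let f : NielsenSet k → {c // c ∈ Packed.scalars} := fun g => ⟨inv g, hinv g⟩
  have hker : (Relation.EqvGen.setoid (InnerRel k)).comap Subtype.val = Setoid.ker f := by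
    ext g h
    refine ⟨fun hgh => Subtype.ext ?_, fun hgh => ?_⟩
    · exact (Packed.HasLiftingInvariant.iff_of_eqvGen (hinv g) hgh).1 (hlift g) |>.unique (hlift h)
    · have hinv : inv g = inv h := congrArg Subtype.val hgh
      have hcg := hinv ▸ hlift g
      exact (hcg.hurwitzEquiv (by omega) g.2 h.2 (hlift h)).mono fun _ _ => .inl
  have hsurj : Function.Surjective f := by
    rintro ⟨c, hc⟩
    obtain ⟨g, hg, hcg⟩ := Packed.HasLiftingInvariant.exists_nielsenSet hk hc
    exact ⟨⟨g, hg⟩, Subtype.ext ((hlift ⟨g, hg⟩).unique hcg)⟩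
  rw [hker, Nat.card_congr (Setoid.quotientKerEquivOfSurjective f hsurj), Packed.card_scalars]
end

section
/- The quotient of the Nielsen class Ni(A6, C_{2×2}^5) by the equivalence relation generated by the Hurwitz moves together with simultaneous conjugation of all entries by a single element of A6 (the inner action) has exactly two equivalence classes. -/
/-!
Three steps show that every factorization of `1` into five double transpositions can be brought by
Hurwitz moves to a form that begins with a repeated entry or to a conjugate of one fixed quintuple
of generators. Among three double transpositions, moves produce two consecutive ones that agree at
two or more letters. Applying this to the first three and then to the last three entries leaves few
quintuples up to conjugation in `S₆`, and moves turn each of these into one whose first two entries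
have the same fixed letters. The first two entries now commute, and a second enumeration ends the
reduction.

A repeated entry `x` cancels, so the other three entries multiply to `1`. They generate a Klein
four-group that, together with `x`, preserves a set of permutations not preserved by `A₆`. Hence
the Nielsen class is a single orbit of Hurwitz moves and conjugation by `S₆`, and it consists of at
most two orbits when only `A₆` is allowed to conjugate, because the two cosets of `A₆` in `S₆` give
the two representatives.

These two are separated by Serre's lifting invariant in the triple cover `3·A₆`. A double
transposition lifts uniquely to an involution of the cover, this lift commutes with conjugation, and
so the product of the lifts, a central element, is unchanged by Hurwitz moves and conjugation by
`A₆`. It is a generator `z` of the centre for one representative and `z⁻¹` for the other.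
-/

/-- One Hurwitz move on lists: `a, b ↦ b, b⁻¹ a b` in adjacent positions. Lists, unlike tuples
indexed by `Fin k`, can be cut, concatenated and rotated freely. -/
inductive HurwitzStep {G : Type*} [Group G] : List G → List G → Prop
  | mk (p q : List G) (a b : G) :
      HurwitzStep (p ++ a :: b :: q) (p ++ b :: (b⁻¹ * a * b) :: q)

/-- A list can be transformed into another one by finitely many forward Hurwitz moves. -/
def HurwitzReach {G : Type*} [Group G] : List G → List G → Prop :=
  Relation.ReflTransGen HurwitzStep

/-- The Hurwitz move at position `i` (counted from `0`) as a function on lists, constant when there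
is no such position. -/
def braid {G : Type*} [Group G] : ℕ → List G → List G
  | 0, a :: b :: l => b :: (b⁻¹ * a * b) :: l
  | i + 1, a :: l => a :: braid i l
  | _, l => l

/-- The composite of the Hurwitz moves at the positions listed in `w`, from left to right. -/
def braidWord {G : Type*} [Group G] (w : List ℕ) (l : List G) : List G :=
  w.foldl (fun l i ↦ braid i l) l

/-- Some two consecutive entries of the list are related by `r`. -/
def HasAdjacentPair {α : Type*} (r : α → α → Prop) : List α → Prop
  | x :: y :: l => r x y ∨ HasAdjacentPair r (y :: l)
  | _ => False

instance HasAdjacentPair.decidablePred {α : Type*} (r : α → α → Prop) [DecidableRel r] :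
    DecidablePred (HasAdjacentPair r)
  | [] => isFalse id
  | [_] => isFalse id
  | _ :: y :: l => @instDecidableOr _ _ _ (decidablePred r (y :: l))

/-- Hurwitz moves can make the first two entries of the list related by `r`. -/
def ReachesHeadPair {G : Type*} [Group G] (r : G → G → Prop) (l : List G) : Prop :=
  ∃ x y q, HurwitzReach l (x :: y :: q) ∧ r x y

section Hurwitz

variable {G H : Type*} [Group G] [Group H] {l l' : List G}

lemma HurwitzStep.append_left (p : List G) (h : HurwitzStep l l') :
    HurwitzStep (p ++ l) (p ++ l') := by
  obtain ⟨p', q, a, b⟩ := h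
  simpa only [List.append_assoc] using HurwitzStep.mk (p ++ p') q a b

lemma HurwitzStep.append_right (q : List G) (h : HurwitzStep l l') :
    HurwitzStep (l ++ q) (l' ++ q) := by
  obtain ⟨p, q', a, b⟩ := h
  simpa only [List.append_assoc, List.cons_append] using HurwitzStep.mk p (q' ++ q) a b

lemma HurwitzStep.map {F : Type*} [FunLike F G H] [MonoidHomClass F G H] (f : F)
    (h : HurwitzStep l l') :
    HurwitzStep (l.map f) (l'.map f) := by
  obtain ⟨p, q, a, b⟩ := h
  simpa using HurwitzStep.mk (p.map f) (q.map f) (f a) (f b)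

lemma HurwitzStep.length_eq (h : HurwitzStep l l') : l'.length = l.length := by
  obtain ⟨p, q, a, b⟩ := h
  simp

lemma HurwitzStep.closure_eq (h : HurwitzStep l l') :
    Subgroup.closure {x | x ∈ l'} = Subgroup.closure {x | x ∈ l} := by
  obtain ⟨p, q, a, b⟩ := h
  apply le_antisymm <;> rw [Subgroup.closure_le] <;> intro x hx
  · have mem_closure {y : G} (hy : y ∈ p ++ a :: b :: q) :
        y ∈ Subgroup.closure {x | x ∈ p ++ a :: b :: q} := Subgroup.subset_closure hy
    have ha := mem_closure (y := a) (by simp)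
    have hb := mem_closure (y := b) (by simp)
    simp only [Set.mem_ofPred_eq, List.mem_append, List.mem_cons] at hx
    obtain hx | rfl | rfl | hx := hx
    · exact mem_closure (by simp [hx])
    · exact hb
    · exact mul_mem (mul_mem (inv_mem hb) ha) hb
    · exact mem_closure (by simp [hx])
  · have mem_closure {y : G} (hy : y ∈ p ++ b :: (b⁻¹ * a * b) :: q) :
        y ∈ Subgroup.closure {x | x ∈ p ++ b :: (b⁻¹ * a * b) :: q} := Subgroup.subset_closure hy
    have hb := mem_closure (y := b) (by simp)
    have hab := mem_closure (y := b⁻¹ * a * b) (by simp)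
    simp only [Set.mem_ofPred_eq, List.mem_append, List.mem_cons] at hx
    obtain hx | rfl | rfl | hx := hx
    · exact mem_closure (by simp [hx])
    · simpa [mul_assoc] using mul_mem (mul_mem hb hab) (inv_mem hb)
    · exact hb
    · exact mem_closure (by simp [hx])

lemma HurwitzStep.forall_mem_iff {C : G → Prop} (hC : ∀ a b, C (b⁻¹ * a * b) ↔ C a)
    (h : HurwitzStep l l') : (∀ x ∈ l', C x) ↔ ∀ x ∈ l, C x := by
  obtain ⟨p, q, a, b⟩ := h
  simp only [List.forall_mem_append, List.forall_mem_cons, hC]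
  tauto

lemma HurwitzStep.prod_map_eq {M : Type*} [Monoid M] {C : G → Prop} {f : G → M}
    (hf : ∀ a b, C a → C b → f a * f b = f b * f (b⁻¹ * a * b))
    (hl : ∀ x ∈ l, C x) (h : HurwitzStep l l') : (l'.map f).prod = (l.map f).prod := by
  obtain ⟨p, q, a, b⟩ := h
  have hab := hf a b (hl a (by simp)) (hl b (by simp))
  simp only [List.map_append, List.map_cons, List.prod_append, List.prod_cons]
  rw [← mul_assoc (f b), ← hab, mul_assoc]

namespace HurwitzReach

@[refl] lemma refl (l : List G) : HurwitzReach l l := Relation.ReflTransGen.refl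

lemma trans {l₁ l₂ l₃ : List G} (h₁₂ : HurwitzReach l₁ l₂) (h₂₃ : HurwitzReach l₂ l₃) :
    HurwitzReach l₁ l₃ :=
  Relation.ReflTransGen.trans h₁₂ h₂₃

lemma append_left (p : List G) (h : HurwitzReach l l') : HurwitzReach (p ++ l) (p ++ l') :=
  Relation.ReflTransGen.lift (p ++ ·) (fun _ _ ↦ HurwitzStep.append_left p) _ _ h

lemma append_right (q : List G) (h : HurwitzReach l l') : HurwitzReach (l ++ q) (l' ++ q) :=
  Relation.ReflTransGen.lift (· ++ q) (fun _ _ ↦ HurwitzStep.append_right q) _ _ h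

lemma map {F : Type*} [FunLike F G H] [MonoidHomClass F G H] (f : F) (h : HurwitzReach l l') :
    HurwitzReach (l.map f) (l'.map f) :=
  Relation.ReflTransGen.lift (List.map f) (fun _ _ ↦ HurwitzStep.map f) _ _ h

lemma apply_eq {α : Type*} {φ : List G → α} (hφ : ∀ l l', HurwitzStep l l' → φ l' = φ l)
    (h : HurwitzReach l l') : φ l' = φ l := by
  induction h with
  | refl => rfl
  | tail _ hstep ih => exact (hφ _ _ hstep).trans ih

lemma length_eq (h : HurwitzReach l l') : l'.length = l.length :=
  h.apply_eq fun _ _ ↦ HurwitzStep.length_eq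

lemma prod_eq (h : HurwitzReach l l') : l'.prod = l.prod :=
  h.apply_eq fun _ _ hstep ↦ by
    simpa using hstep.prod_map_eq (C := fun _ ↦ True) (f := id) (by simp [mul_assoc]) (by simp)

lemma closure_eq (h : HurwitzReach l l') :
    Subgroup.closure {x | x ∈ l'} = Subgroup.closure {x | x ∈ l} :=
  h.apply_eq (φ := fun l ↦ Subgroup.closure {x | x ∈ l}) fun _ _ ↦ HurwitzStep.closure_eq

lemma forall_mem_iff {C : G → Prop} (hC : ∀ a b, C (b⁻¹ * a * b) ↔ C a)
    (h : HurwitzReach l l') : (∀ x ∈ l', C x) ↔ ∀ x ∈ l, C x :=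
  Iff.of_eq <| h.apply_eq (φ := fun l ↦ ∀ x ∈ l, C x)
    fun _ _ hstep ↦ propext (hstep.forall_mem_iff hC)

lemma cons_append_conj (a : G) (l : List G) :
    HurwitzReach (a :: l) (l ++ [l.prod⁻¹ * a * l.prod]) := by
  induction l generalizing a with
  | nil => simpa using refl [a]
  | cons b l ih =>
    have hstep : HurwitzReach (a :: b :: l) (b :: (b⁻¹ * a * b) :: l) := .single (.mk [] l a b)
    refine hstep.trans ?_
    simpa [mul_assoc] using (ih (b⁻¹ * a * b)).append_left [b]

end HurwitzReach

lemma hurwitzReach_braid (i : ℕ) (l : List G) : HurwitzReach l (braid i l) := by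
  fun_induction braid i l with
  | case1 a b l => exact .single (.mk [] l a b)
  | case2 i a l ih => exact ih.append_left [a]
  | case3 => exact .refl _

lemma hurwitzReach_braidWord (w : List ℕ) (l : List G) : HurwitzReach l (braidWord w l) := by
  induction w generalizing l with
  | nil => exact .refl _
  | cons i w ih => exact (hurwitzReach_braid i l).trans (ih _)

namespace ReachesHeadPair

variable {r : G → G → Prop}

lemma of_reach (hl : HurwitzReach l l') : ReachesHeadPair r l' → ReachesHeadPair r l
  | ⟨x, y, q, h, hr⟩ => ⟨x, y, q, hl.trans h, hr⟩

lemma of_map {F : Type*} [EquivLike F G G] [MulEquivClass F G G] (f : F)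
    (hr : ∀ x y, r (f x) (f y) → r x y) (h : ReachesHeadPair r (l.map f)) :
    ReachesHeadPair r l := by
  obtain ⟨x, y, q, hreach, hxy⟩ := h
  let e := (MulEquivClass.toMulEquiv f).symm
  have he (z : G) : f (e z) = z := EquivLike.apply_inv_apply f z
  refine ⟨e x, e y, q.map e, ?_, hr _ _ (by rwa [he, he])⟩
  simpa [Function.comp_def, e] using hreach.map e

lemma cons (a : G) (h : ReachesHeadPair r l) : ReachesHeadPair r (a :: l) := by
  obtain ⟨x, y, q, hreach, hxy⟩ := h
  exact ⟨x, y, _, (hreach.append_left [a]).trans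
    ((HurwitzReach.cons_append_conj a [x, y]).append_right q), hxy⟩

lemma of_hasAdjacentPair (h : HasAdjacentPair r l) : ReachesHeadPair r l := by
  fun_induction HasAdjacentPair r l with
  | case1 x y l ih => exact h.elim (fun hxy ↦ ⟨x, y, l, .refl _, hxy⟩) fun h ↦ (ih h).cons x
  | case2 => exact h.elim

end ReachesHeadPair

lemma HurwitzMove.hurwitzStep {k : ℕ} {g h : Fin k → G} (hgh : HurwitzMove g h) :
    HurwitzStep (List.ofFn g) (List.ofFn h) := by
  obtain ⟨i, hi, hfst, hsnd, hrest⟩ := hgh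
  have split (f : Fin k → G) : List.ofFn f = (List.ofFn f).take i ++
      f ⟨i, by lia⟩ :: f ⟨i + 1, hi⟩ :: (List.ofFn f).drop (i + 2) := by
    conv_lhs => rw [← List.take_append_drop i (List.ofFn f),
      List.drop_eq_getElem_cons (by simp; lia), List.drop_eq_getElem_cons (by simp; lia)]
    simp
  have htake : (List.ofFn h).take i = (List.ofFn g).take i :=
    List.ext_getElem (by simp) fun n hn _ ↦ by
      simp only [List.length_take, List.length_ofFn] at hn
      simpa using hrest ⟨n, by lia⟩ (by simp; lia) (by simp; lia)
  have hdrop : (List.ofFn h).drop (i + 2) = (List.ofFn g).drop (i + 2) :=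
    List.ext_getElem (by simp) fun n hn _ ↦ by
      simp only [List.length_drop, List.length_ofFn] at hn
      simpa using hrest ⟨i + 2 + n, by lia⟩ (by simp; lia) (by simp; lia)
  rw [split g, split h, htake, hdrop, hfst, hsnd]
  exact .mk _ _ _ _

lemma HurwitzStep.hurwitzMove {k : ℕ} {g h : Fin k → G}
    (hgh : HurwitzStep (List.ofFn g) (List.ofFn h)) : HurwitzMove g h := by
  generalize hl : List.ofFn g = l, hl' : List.ofFn h = l' at hgh
  obtain ⟨p, q, a, b⟩ := hgh
  have hk : k = p.length + (q.length + 1 + 1) := by simpa using congrArg List.length hl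
  have hg (j : Fin k) : g j = (p ++ a :: b :: q)[j]'(by simp; lia) := by simp [← hl]
  have hh (j : Fin k) : h j = (p ++ b :: (b⁻¹ * a * b) :: q)[j]'(by simp; lia) := by simp [← hl']
  refine ⟨p.length, by lia, by simp [hg, hh], by simp [hg, hh], fun j hj hj' ↦ ?_⟩
  rw [hg, hh]
  obtain hlt | hgt : j < p.length ∨ p.length + 2 ≤ (j : ℕ) := by lia
  · simp [List.getElem_append_left, hlt]
  · obtain ⟨n, hn⟩ := Nat.exists_eq_add_of_le hgt
    simp [List.getElem_append_right, hn, Nat.add_assoc, Nat.add_comm 2]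

lemma HurwitzReach.hurwitzEquiv {k : ℕ} {g h : Fin k → G}
    (hgh : HurwitzReach (List.ofFn g) (List.ofFn h)) : HurwitzEquiv g h := by
  generalize hl' : List.ofFn h = l' at hgh
  induction hgh generalizing h with
  | refl => exact List.ofFn_injective hl' ▸ .refl _
  | @tail m _ hreach hstep ih =>
    have hm : m.length = k := by simpa using HurwitzReach.length_eq hreach
    obtain ⟨f, rfl⟩ : ∃ f : Fin k → G, List.ofFn f = m := ⟨fun i ↦ m[i], by
      subst hm; simp⟩
    subst hl'
    exact .trans _ _ _ (ih rfl) (.rel _ _ hstep.hurwitzMove)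

end Hurwitz

open Equiv

section DoubleTranspositions

/-- The product `(i j)(k l)` of two transpositions of six letters. -/
abbrev doubleSwap (i j k l : Fin 6) : Perm (Fin 6) := swap i j * swap k l

/-- The products of two disjoint transpositions of six letters, that is, the conjugacy class
`C_{2×2}`: `(i j)(k l)` with `i < j`, `k < l` and `i < k` so that each is listed once. -/
def doubleTranspositions : List (Perm (Fin 6)) :=
  (List.finRange 6).flatMap fun i ↦ (List.finRange 6).flatMap fun j ↦
    (List.finRange 6).flatMap fun k ↦ ((List.finRange 6).filter fun l ↦
      i < j ∧ i < k ∧ k < l ∧ j ≠ k ∧ j ≠ l).map (doubleSwap i j k)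

-- The kernel evaluates these much faster than the instances of the library.
instance decidableForallMemList {α : Type*} {p : α → Prop} [DecidablePred p] (l : List α) :
    Decidable (∀ x ∈ l, p x) :=
  decidable_of_iff (l.all (p ·)) (by simp)

instance decidableExistsMemList {α : Type*} {p : α → Prop} [DecidablePred p] (l : List α) :
    Decidable (∃ x ∈ l, p x) :=
  decidable_of_iff (l.any (p ·)) (by simp)

lemma mem_doubleTranspositions_iff_sign {g : Perm (Fin 6)} :
    g ∈ doubleTranspositions ↔ g * g = 1 ∧ g ≠ 1 ∧ Perm.sign g = 1 := by
  have hall : ∀ g : Perm (Fin 6), g * g = 1 → g ≠ 1 → Perm.sign g = 1 →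
      g ∈ doubleTranspositions := by
    decide +kernel
  have hmem : ∀ g ∈ doubleTranspositions, g * g = 1 ∧ g ≠ 1 ∧ Perm.sign g = 1 := by
    decide +kernel
  exact ⟨hmem g, fun ⟨hsq, hne, hsign⟩ ↦ hall g hsq hne hsign⟩

lemma mem_doubleTranspositions_iff {g : Perm (Fin 6)} :
    g ∈ doubleTranspositions ↔ g ∈ alternatingGroup (Fin 6) ∧ orderOf g = 2 := by
  rw [mem_doubleTranspositions_iff_sign, orderOf_eq_prime_iff, pow_two, Perm.mem_alternatingGroup]
  tauto

lemma mem_doubleTranspositions_iff_cycleType {g : Perm (Fin 6)} :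
    g ∈ doubleTranspositions ↔ g.cycleType = {2, 2} := by
  rw [mem_doubleTranspositions_iff, Perm.mem_alternatingGroup]
  constructor
  · rintro ⟨hsign, horder⟩
    obtain ⟨n, hn⟩ := Perm.cycleType_prime_order (horder ▸ Nat.prime_two)
    have hsum := Perm.sum_cycleType_le g
    rw [hn, horder, Multiset.sum_replicate, Fintype.card_fin, smul_eq_mul] at hsum
    rw [Perm.sign_of_cycleType, hn, horder] at hsign
    obtain rfl | rfl | rfl : n = 0 ∨ n = 1 ∨ n = 2 := by lia
    · exact absurd hsign (by decide)
    · rw [hn, horder]; rfl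
    · exact absurd hsign (by decide)
  · intro hg
    exact ⟨by rw [Perm.sign_of_cycleType, hg]; rfl, by rw [← Perm.lcm_cycleType, hg]; rfl⟩

lemma closure_doubleTranspositions :
    Subgroup.closure {g | g ∈ doubleTranspositions} = alternatingGroup (Fin 6) := by
  simp only [mem_doubleTranspositions_iff_cycleType]
  exact Perm.closure_cycleType_eq_two_two_eq_alternatingGroup (by simp)

lemma conj_mem_doubleTranspositions_iff {s g : Perm (Fin 6)} :
    MulAut.conj s g ∈ doubleTranspositions ↔ g ∈ doubleTranspositions := by
  simp only [MulAut.conj_apply, mem_doubleTranspositions_iff_cycleType, Perm.cycleType_conj]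

lemma exists_conj_eq {a b : Perm (Fin 6)} (ha : a ∈ doubleTranspositions)
    (hb : b ∈ doubleTranspositions) : ∃ s, MulAut.conj s a = b := by
  rw [mem_doubleTranspositions_iff_cycleType] at ha hb
  exact isConj_iff.mp (Perm.isConj_iff_cycleType_eq.mpr (ha.trans hb.symm))

end DoubleTranspositions

section Nielsen

/-- A factorization of `1` into double transpositions: a list form of the tuples of the Nielsen
class, without the generation requirement. -/
structure IsProductOne (l : List (Perm (Fin 6))) : Prop where
  mem : ∀ x ∈ l, x ∈ doubleTranspositions
  prod_eq : l.prod = 1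

/-- The list form of the Nielsen class `Ni(A₆, C_{2×2}^k)`. -/
structure IsNielsen (l : List (Perm (Fin 6))) : Prop extends IsProductOne l where
  closure_eq : Subgroup.closure {x | x ∈ l} = alternatingGroup (Fin 6)

variable {l l' : List (Perm (Fin 6))}

lemma mem_nielsenSet_iff {k : ℕ} {g : Fin k → Perm (Fin 6)} :
    g ∈ NielsenSet k ↔ IsNielsen (List.ofFn g) := by
  have hrange : {x | x ∈ List.ofFn g} = Set.range g := by ext; simp [List.mem_ofFn]
  constructor
  · rintro ⟨halt, horder, hprod, hclosure⟩
    refine ⟨⟨?_, hprod⟩, hrange ▸ hclosure⟩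
    simpa [List.forall_mem_ofFn_iff, mem_doubleTranspositions_iff] using
      fun i ↦ ⟨halt i, horder i⟩
  · rintro ⟨⟨hmem, hprod⟩, hclosure⟩
    simp only [List.forall_mem_ofFn_iff, mem_doubleTranspositions_iff] at hmem
    exact ⟨fun i ↦ (hmem i).1, fun i ↦ (hmem i).2, hprod, hrange ▸ hclosure⟩

lemma HurwitzReach.forall_mem_doubleTranspositions_iff (h : HurwitzReach l l') :
    (∀ x ∈ l', x ∈ doubleTranspositions) ↔ ∀ x ∈ l, x ∈ doubleTranspositions :=
  h.forall_mem_iff fun a b ↦ by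
    simpa using conj_mem_doubleTranspositions_iff (s := b⁻¹) (g := a)

lemma IsProductOne.of_reach (hl : IsProductOne l) (h : HurwitzReach l l') : IsProductOne l' :=
  ⟨h.forall_mem_doubleTranspositions_iff.mpr hl.mem, h.prod_eq.trans hl.prod_eq⟩

lemma IsNielsen.of_reach (hl : IsNielsen l) (h : HurwitzReach l l') : IsNielsen l' :=
  ⟨hl.toIsProductOne.of_reach h, h.closure_eq.trans hl.closure_eq⟩

lemma IsProductOne.map_conj (hl : IsProductOne l) (s : Perm (Fin 6)) :
    IsProductOne (l.map (MulAut.conj s)) where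
  mem := by simpa only [List.forall_mem_map, conj_mem_doubleTranspositions_iff] using hl.mem
  prod_eq := by rw [← map_list_prod, hl.prod_eq, map_one]

lemma IsNielsen.map_conj (hl : IsNielsen l) (s : Perm (Fin 6)) :
    IsNielsen (l.map (MulAut.conj s)) where
  toIsProductOne := hl.toIsProductOne.map_conj s
  closure_eq := by
    have himage : {x | x ∈ l.map (MulAut.conj s)} = (MulAut.conj s).toMonoidHom '' {x | x ∈ l} := by
      ext; simp
    rw [himage, ← MonoidHom.map_closure, hl.closure_eq]
    exact Subgroup.Normal.map_conj_eq _ s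

end Nielsen

section Pairs

/-- The permutations take the same value at two or more letters. -/
def AgreeTwice (x y : Perm (Fin 6)) : Prop := 1 < (Finset.univ.filter fun i ↦ x i = y i).card

/-- The permutations have the same fixed letters. -/
def SameFixed (x y : Perm (Fin 6)) : Prop := ∀ i, x i = i ↔ y i = i

instance : DecidableRel AgreeTwice := fun _ _ ↦ Nat.decLt _ _

instance : DecidableRel SameFixed := fun _ _ ↦ Fintype.decidableForallFintype

lemma agreeTwice_conj_iff {s x y : Perm (Fin 6)} :
    AgreeTwice (MulAut.conj s x) (MulAut.conj s y) ↔ AgreeTwice x y := by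
  unfold AgreeTwice
  rw [Finset.card_bijective (s⁻¹ : Perm (Fin 6)) (s⁻¹).bijective fun i ↦ ?_]
  simp [Perm.mul_apply]

lemma sameFixed_conj_iff {s x y : Perm (Fin 6)} :
    SameFixed (MulAut.conj s x) (MulAut.conj s y) ↔ SameFixed x y := by
  unfold SameFixed
  rw [(s⁻¹ : Perm (Fin 6)).forall_congr fun {i} ↦ ?_]
  simp [Perm.mul_apply, ← Perm.eq_inv_iff_eq]

/-- Representatives `b`, up to conjugation by the centralizer of `a = (0 1)(2 3)`, of the double
transpositions for which `a` and `b` agree at two or more letters. -/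
def agreeingRepresentatives : List (Perm (Fin 6)) :=
  [doubleSwap 0 1 2 3, doubleSwap 0 2 1 3, doubleSwap 0 1 4 5, doubleSwap 0 1 2 4]

/-- Representatives of the remaining double transpositions. -/
def skewRepresentatives : List (Perm (Fin 6)) :=
  [doubleSwap 0 2 1 4, doubleSwap 0 2 4 5, doubleSwap 0 4 2 5, doubleSwap 0 4 1 5]

lemma exists_centralizer_conj_mem_representatives : ∀ b ∈ doubleTranspositions,
    ∃ s ∈ [1, swap 0 1], ∃ t ∈ [1, swap 2 3], ∃ u ∈ [1, doubleSwap 0 2 1 3],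
      ∃ v ∈ [1, swap 4 5], MulAut.conj (s * t * u * v) (doubleSwap 0 1 2 3) = doubleSwap 0 1 2 3 ∧
        MulAut.conj (s * t * u * v) b ∈ agreeingRepresentatives ++ skewRepresentatives := by
  decide +kernel

lemma exists_conj_pair_mem_representatives {a b : Perm (Fin 6)}
    (ha : a ∈ doubleTranspositions) (hb : b ∈ doubleTranspositions) :
    ∃ s, MulAut.conj s a = doubleSwap 0 1 2 3 ∧
      MulAut.conj s b ∈ agreeingRepresentatives ++ skewRepresentatives := by
  obtain ⟨r, hr⟩ := exists_conj_eq ha (by decide +kernel : doubleSwap 0 1 2 3 ∈ _)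
  obtain ⟨s, _, t, _, u, _, v, _, hfix, hmem⟩ := exists_centralizer_conj_mem_representatives _
    (conj_mem_doubleTranspositions_iff.mpr hb : MulAut.conj r b ∈ _)
  refine ⟨s * t * u * v * r, ?_, ?_⟩
  · rw [map_mul, MulAut.mul_apply, hr, hfix]
  · rwa [map_mul, MulAut.mul_apply]

lemma agreeTwice_iff_of_mem_representatives :
    ∀ b ∈ agreeingRepresentatives ++ skewRepresentatives,
      AgreeTwice (doubleSwap 0 1 2 3) b ↔ b ∈ agreeingRepresentatives := by
  decide +kernel

lemma exists_braidWord_agreeTwice : ∀ b ∈ skewRepresentatives, ∀ c ∈ doubleTranspositions,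
    ∃ w ∈ [[1], [0], [1, 1], [0, 0], [0, 1, 1], [1, 1, 0, 0], [0, 0, 0]],
      HasAdjacentPair AgreeTwice (braidWord w [doubleSwap 0 1 2 3, b, c]) := by
  decide +kernel

lemma reachesHeadPair_agreeTwice {a b c : Perm (Fin 6)} (ha : a ∈ doubleTranspositions)
    (hb : b ∈ doubleTranspositions) (hc : c ∈ doubleTranspositions) :
    ReachesHeadPair AgreeTwice [a, b, c] := by
  obtain ⟨s, hsa, hsb⟩ := exists_conj_pair_mem_representatives ha hb
  apply ReachesHeadPair.of_map (MulAut.conj s) fun _ _ ↦ agreeTwice_conj_iff.mp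
  have hsc := (conj_mem_doubleTranspositions_iff (s := s)).mpr hc
  simp only [List.map_cons, List.map_nil, hsa]
  obtain hagree | hskew := List.mem_append.mp hsb
  · exact ⟨_, _, _, .refl _, (agreeTwice_iff_of_mem_representatives _ hsb).mpr hagree⟩
  · obtain ⟨w, _, hw⟩ := exists_braidWord_agreeTwice _ hskew _ hsc
    exact .of_reach (hurwitzReach_braidWord w _) (.of_hasAdjacentPair hw)

end Pairs

section Reduction

/-- A generating quintuple, from which every other one arises by Hurwitz moves and conjugation by
elements of `S₆`. -/
def baseTuple : Fin 5 → Perm (Fin 6) :=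
  ![doubleSwap 0 1 2 3, doubleSwap 0 2 1 3, doubleSwap 2 4 3 5, doubleSwap 1 2 3 5,
    doubleSwap 0 3 1 4]

/-- Hurwitz moves transform the list into one that begins with a repetition or into a conjugate of
`baseTuple`. -/
def ReachesStandardForm (l : List (Perm (Fin 6))) : Prop :=
  ReachesHeadPair Eq l ∨ ∃ s, HurwitzReach l ((List.ofFn baseTuple).map (MulAut.conj s))

variable {a b c d e : Perm (Fin 6)} {l l' : List (Perm (Fin 6))}

lemma ReachesStandardForm.of_reach (h : HurwitzReach l l') :
    ReachesStandardForm l' → ReachesStandardForm l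
  | .inl hrep => .inl (hrep.of_reach h)
  | .inr ⟨s, hs⟩ => .inr ⟨s, h.trans hs⟩

lemma ReachesStandardForm.of_map_conj {s : Perm (Fin 6)}
    (h : ReachesStandardForm (l.map (MulAut.conj s))) : ReachesStandardForm l := by
  obtain hrep | ⟨t, ht⟩ := h
  · exact .inl (hrep.of_map (MulAut.conj s) fun _ _ ↦ (MulAut.conj s).injective.eq_iff.mp)
  · refine .inr ⟨s⁻¹ * t, ?_⟩
    simpa [Function.comp_def, mul_assoc] using ht.map (MulAut.conj s⁻¹)

lemma exists_braidWord_hasAdjacentPair_sameFixed :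
    ∀ b ∈ [doubleSwap 0 1 4 5, doubleSwap 0 1 2 4],
      ∀ c ∈ doubleTranspositions, ∀ d ∈ doubleTranspositions, AgreeTwice c d →
      (doubleSwap 0 1 2 3 * b * c * d) ^ 2 = 1 → doubleSwap 0 1 2 3 * b * c * d ≠ 1 →
      ∃ w ∈ [[3, 3, 2], [3, 1, 1], [1, 1, 1, 2], [3, 3, 3], [1, 2, 2, 2], [3, 3, 2, 2],
          [3, 2, 1, 1], [1, 2, 2, 1], [0, 1, 2], [0, 0, 1, 1], [2, 1], [0, 1, 1, 1, 2]],
        HasAdjacentPair SameFixed (braidWord w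
          [doubleSwap 0 1 2 3, b, c, d, (doubleSwap 0 1 2 3 * b * c * d)⁻¹]) := by
  decide +kernel

lemma exists_braidWord_eq_or_conj_baseTuple :
    ∀ c ∈ doubleTranspositions, ∀ d ∈ doubleTranspositions, AgreeTwice c d →
      (doubleSwap 0 1 2 3 * doubleSwap 0 2 1 3 * c * d) ^ 2 = 1 →
      doubleSwap 0 1 2 3 * doubleSwap 0 2 1 3 * c * d ≠ 1 →
      (∃ w ∈ [[], [3], [3, 3]], HasAdjacentPair Eq (braidWord w [doubleSwap 0 1 2 3,
          doubleSwap 0 2 1 3, c, d, (doubleSwap 0 1 2 3 * doubleSwap 0 2 1 3 * c * d)⁻¹])) ∨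
        ∃ w ∈ [[], [0], [2], [3], [2, 2], [2, 3]],
          ∃ s ∈ [1, swap 4 5], ∃ t ∈ [1, swap 1 2], ∃ u ∈ [1, swap 0 3],
          ∃ v ∈ [1, doubleSwap 0 1 2 3], braidWord w [doubleSwap 0 1 2 3,
            doubleSwap 0 2 1 3, c, d, (doubleSwap 0 1 2 3 * doubleSwap 0 2 1 3 * c * d)⁻¹] =
              (List.ofFn baseTuple).map (MulAut.conj (s * t * u * v)) := by
  decide +kernel

lemma IsProductOne.last_eq (h : IsProductOne [a, b, c, d, e]) : e = (a * b * c * d)⁻¹ :=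
  eq_inv_of_mul_eq_one_right (by simpa [mul_assoc] using h.prod_eq)

lemma IsProductOne.sq_eq_one_and_ne_one (h : IsProductOne [a, b, c, d, e]) :
    (a * b * c * d) ^ 2 = 1 ∧ a * b * c * d ≠ 1 := by
  obtain ⟨hsq, hne, -⟩ := mem_doubleTranspositions_iff_sign.mp (h.mem e (by simp))
  rw [h.last_eq] at hsq hne
  exact ⟨by simpa [pow_two, ← mul_inv_rev] using hsq, inv_ne_one.mp hne⟩

lemma exists_reach_agreeTwice_tail (h : IsProductOne [a, b, c, d, e]) :
    ∃ c' d' e', HurwitzReach [a, b, c, d, e] [a, b, c', d', e'] ∧ AgreeTwice c' d' := by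
  obtain ⟨c', d', q, hreach, hagree⟩ := reachesHeadPair_agreeTwice
    (h.mem c (by simp)) (h.mem d (by simp)) (h.mem e (by simp))
  obtain ⟨e', rfl⟩ : ∃ e', q = [e'] := List.length_eq_one_iff.mp (by simpa using hreach.length_eq)
  exact ⟨c', d', e', hreach.append_left [a, b], hagree⟩

lemma sameFixed_iff_of_mem_representatives :
    ∀ b ∈ agreeingRepresentatives ++ skewRepresentatives, SameFixed (doubleSwap 0 1 2 3) b ↔
      b = doubleSwap 0 1 2 3 ∨ b = doubleSwap 0 2 1 3 := by
  decide +kernel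

lemma IsProductOne.reachesStandardForm_of_sameFixed (h : IsProductOne [a, b, c, d, e])
    (hab : SameFixed a b) : ReachesStandardForm [a, b, c, d, e] := by
  obtain ⟨s, hsa, hsb⟩ := exists_conj_pair_mem_representatives
    (h.mem a (by simp)) (h.mem b (by simp))
  apply ReachesStandardForm.of_map_conj (s := s)
  replace h := h.map_conj s
  have hfixed := (sameFixed_conj_iff (s := s)).mpr hab
  simp only [List.map_cons, List.map_nil, hsa] at h hfixed ⊢
  obtain heq | hb := (sameFixed_iff_of_mem_representatives _ hsb).mp hfixed
  · exact .inl ⟨_, _, _, .refl _, heq.symm⟩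
  rw [hb] at h ⊢
  obtain ⟨c', d', e', hreach, hagree⟩ := exists_reach_agreeTwice_tail h
  replace h := h.of_reach hreach
  refine .of_reach hreach ?_
  rw [h.last_eq]
  obtain ⟨w, _, hw⟩ | ⟨w, _, s, _, t, _, u, _, v, _, hw⟩ := exists_braidWord_eq_or_conj_baseTuple
    c' (h.mem c' (by simp)) d' (h.mem d' (by simp)) hagree
    h.sq_eq_one_and_ne_one.1 h.sq_eq_one_and_ne_one.2
  · exact .of_reach (hurwitzReach_braidWord w _) (.inl (.of_hasAdjacentPair hw))
  · exact .inr ⟨s * t * u * v, hw ▸ hurwitzReach_braidWord w _⟩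

lemma IsProductOne.reachesStandardForm_of_agreeTwice (h : IsProductOne [a, b, c, d, e])
    (hab : AgreeTwice a b) : ReachesStandardForm [a, b, c, d, e] := by
  obtain ⟨s, hsa, hsb⟩ := exists_conj_pair_mem_representatives
    (h.mem a (by simp)) (h.mem b (by simp))
  apply ReachesStandardForm.of_map_conj (s := s)
  replace h := h.map_conj s
  have hagree := (agreeTwice_conj_iff (s := s)).mpr hab
  simp only [List.map_cons, List.map_nil, hsa] at h hagree ⊢
  by_cases hfixed : SameFixed (doubleSwap 0 1 2 3) (MulAut.conj s b)
  · exact h.reachesStandardForm_of_sameFixed hfixed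
  have hb : MulAut.conj s b ∈ [doubleSwap 0 1 4 5, doubleSwap 0 1 2 4] := by
    have hmem := (agreeTwice_iff_of_mem_representatives _ hsb).mp hagree
    have hne := mt (sameFixed_iff_of_mem_representatives _ hsb).mpr hfixed
    simp only [agreeingRepresentatives, List.mem_cons] at hmem ⊢
    tauto
  obtain ⟨c', d', e', hreach, hagree'⟩ := exists_reach_agreeTwice_tail h
  replace h := h.of_reach hreach
  refine .of_reach hreach ?_
  obtain ⟨w, _, hw⟩ := exists_braidWord_hasAdjacentPair_sameFixed _ hb
    c' (h.mem c' (by simp)) d' (h.mem d' (by simp)) hagree'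
    h.sq_eq_one_and_ne_one.1 h.sq_eq_one_and_ne_one.2
  rw [← h.last_eq] at hw
  obtain ⟨x, y, q, hreach', hxy⟩ :=
    ReachesHeadPair.of_reach (hurwitzReach_braidWord w _) (.of_hasAdjacentPair hw)
  obtain ⟨z₁, z₂, z₃, rfl⟩ := List.length_eq_three.mp (by simpa using hreach'.length_eq)
  exact .of_reach hreach' ((h.of_reach hreach').reachesStandardForm_of_sameFixed hxy)

lemma IsProductOne.reachesStandardForm (h : IsProductOne l) (hlength : l.length = 5) :
    ReachesStandardForm l := by
  obtain ⟨a, b, c, d, e, rfl⟩ : ∃ a b c d e, l = [a, b, c, d, e] := by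
    match l with
    | [a, b, c, d, e] => exact ⟨a, b, c, d, e, rfl⟩
  obtain ⟨x, y, q, hreach, hagree⟩ := reachesHeadPair_agreeTwice
    (h.mem a (by simp)) (h.mem b (by simp)) (h.mem c (by simp))
  obtain ⟨z, rfl⟩ : ∃ z, q = [z] := List.length_eq_one_iff.mp (by simpa using hreach.length_eq)
  replace hreach := hreach.append_right [d, e]
  exact .of_reach hreach ((h.of_reach hreach).reachesStandardForm_of_agreeTwice hagree)

end Reduction

section Repetition

/-- Sets of permutations whose stabilizers under conjugation are proper subgroups that contain
`(0 1)(2 3)` and one of `(0 2)(1 3)` and `(0 1)(4 5)`: the transpositions moving a given letter,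
single involutions, and two synthematic totals (sets of five fixed-point-free involutions such
that every transposition occurs in exactly one of them). -/
def invariantSets : List (List (Perm (Fin 6))) :=
  [[swap 4 0, swap 4 1, swap 4 2, swap 4 3, swap 4 5],
    [swap 5 0, swap 5 1, swap 5 2, swap 5 3, swap 5 4],
    [swap 0 1], [swap 2 3], [swap 4 5],
    [doubleSwap 0 1 2 3 * swap 4 5], [doubleSwap 0 2 1 3 * swap 4 5],
    [doubleSwap 0 3 1 2 * swap 4 5],
    [doubleSwap 0 1 2 3 * swap 4 5, doubleSwap 0 2 1 4 * swap 3 5, doubleSwap 0 3 1 5 * swap 2 4,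
      doubleSwap 0 4 1 3 * swap 2 5, doubleSwap 0 5 1 2 * swap 3 4],
    [doubleSwap 0 1 2 3 * swap 4 5, doubleSwap 0 2 1 5 * swap 3 4, doubleSwap 0 3 1 4 * swap 2 5,
      doubleSwap 0 5 1 3 * swap 2 4, doubleSwap 0 4 1 2 * swap 3 5]]

variable {x c d f : Perm (Fin 6)} {l : List (Perm (Fin 6))}

lemma exists_invariantSets_forall_conj_mem : ∀ d ∈ [doubleSwap 0 2 1 3, doubleSwap 0 1 4 5],
    ∀ x ∈ doubleTranspositions, ∃ S ∈ invariantSets,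
      ∀ g ∈ [x, doubleSwap 0 1 2 3, d], ∀ h ∈ S, g * h * g⁻¹ ∈ S := by
  decide +kernel

lemma exists_conj_notMem_of_mem_invariantSets :
    ∀ S ∈ invariantSets, ∃ g ∈ doubleTranspositions, ∃ h ∈ S, g * h * g⁻¹ ∉ S := by
  decide +kernel

lemma not_alternatingGroup_le_normalizer {S : List (Perm (Fin 6))} (hS : S ∈ invariantSets) :
    ¬ alternatingGroup (Fin 6) ≤ Subgroup.normalizer {h | h ∈ S} := by
  intro hle
  obtain ⟨g, hg, h, hh, hnot⟩ := exists_conj_notMem_of_mem_invariantSets S hS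
  exact hnot ((hle (mem_doubleTranspositions_iff.mp hg).1 h).mp hh)

lemma mem_of_doubleSwap_mul_involutive : ∀ d ∈ agreeingRepresentatives ++ skewRepresentatives,
    (doubleSwap 0 1 2 3 * d) ^ 2 = 1 → doubleSwap 0 1 2 3 * d ≠ 1 →
      d ∈ [doubleSwap 0 2 1 3, doubleSwap 0 1 4 5] := by
  decide +kernel

lemma not_isNielsen_of_repetition : ¬ IsNielsen [x, x, c, d, f] := by
  intro h
  obtain ⟨s, hsc, hsd⟩ := exists_conj_pair_mem_representatives
    (h.mem c (by simp)) (h.mem d (by simp))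
  replace h := h.map_conj s
  simp only [List.map_cons, List.map_nil, hsc] at h
  generalize MulAut.conj s x = x at h
  generalize MulAut.conj s d = d at h hsd
  generalize MulAut.conj s f = f at h
  have hx : x ∈ doubleTranspositions := h.mem x (by simp)
  have hf := h.last_eq
  have hcd := h.sq_eq_one_and_ne_one
  simp only [(mem_doubleTranspositions_iff_sign.mp hx).1, one_mul] at hf hcd
  obtain ⟨S, hS, hstable⟩ := exists_invariantSets_forall_conj_mem d
    (mem_of_doubleSwap_mul_involutive d hsd hcd.1 hcd.2) x hx
  apply not_alternatingGroup_le_normalizer hS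
  have mem_normalizer (g) (hg : g ∈ [x, doubleSwap 0 1 2 3, d]) :
      g ∈ Subgroup.normalizer {h | h ∈ S} :=
    Subgroup.mem_normalizer_fintype (hstable g hg)
  rw [← h.closure_eq, Subgroup.closure_le, hf]
  simp only [List.forall_mem_cons] at mem_normalizer
  obtain ⟨hx, hc, hd, -⟩ := mem_normalizer
  rintro g hg
  simp only [List.mem_cons, Set.mem_ofPred_eq, List.not_mem_nil, or_false] at hg
  obtain rfl | rfl | rfl | rfl | rfl := hg
  exacts [hx, hx, hc, hd, inv_mem (mul_mem hc hd)]

lemma IsNielsen.not_reachesHeadPair_eq (h : IsNielsen l) (hlength : l.length = 5) :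
    ¬ ReachesHeadPair Eq l := by
  rintro ⟨x, _, q, hreach, rfl⟩
  obtain ⟨c, d, f, rfl⟩ := List.length_eq_three.mp
    (by simpa [hlength] using hreach.length_eq : q.length = 3)
  exact not_isNielsen_of_repetition (h.of_reach hreach)

end Repetition

section LiftingInvariant

/-- The quadratic character of `i - j` on the projective line `ℙ¹(𝔽₅) = {0, …, 4, ∞}`, with `∞`
encoded as `5` and `χ(∞) = 1`. The residue of `i + 4 * j` modulo `5` is that of `i - j`. -/
def paleySign (i j : Fin 6) : ZMod 3 :=
  if i = j then 0
  else if i = 5 ∨ j = 5 ∨ (i + 4 * j : ℕ) % 5 = 1 ∨ (i + 4 * j : ℕ) % 5 = 4 then 1 else -1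

/-- The two-graph of the Paley graph with a point at infinity: a sign for each triple of letters. -/
def triangleSign (i j k : Fin 6) : ZMod 3 := paleySign i j * paleySign j k * paleySign i k

/-- The translation by which the lift of `g` to the triple cover moves the fibre over `i`,
determined by the two fixed letters of `g`. -/
def liftShift (g : Perm (Fin 6)) (i : Fin 6) : ZMod 3 :=
  match (List.finRange 6).filter fun m ↦ g m = m with
  | [m, n] => triangleSign m n (g i) - triangleSign m n i
  | _ => 0

/-- The involution of `Fin 6 × ZMod 3` that lifts a double transposition. These lifts form a
conjugacy class of the triple cover `3·A₆`, acting on the hyperoval in `ℙ²(𝔽₄)` with its scalars. -/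
def coverLift (g : Perm (Fin 6)) : Function.End (Fin 6 × ZMod 3) :=
  fun p ↦ (g p.1, p.2 + liftShift g p.1)

/-- The central element `z` of the triple cover. -/
def centralShift : Function.End (Fin 6 × ZMod 3) := fun p ↦ (p.1, p.2 + 1)

/-- The list consists of double transpositions whose canonical lifts to the triple cover of `A₆`
multiply to the central element `z`. -/
structure LiftsToCentralShift (l : List (Perm (Fin 6))) : Prop where
  mem : ∀ x ∈ l, x ∈ doubleTranspositions
  prod_coverLift : (l.map coverLift).prod = centralShift

variable {a b s : Perm (Fin 6)} {l l' : List (Perm (Fin 6))}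

lemma liftShift_conj : ∀ a ∈ doubleTranspositions, ∀ b ∈ doubleTranspositions, ∀ i,
    liftShift b i + liftShift a (b i) =
      liftShift (b⁻¹ * a * b) i + liftShift b ((b⁻¹ * a * b) i) := by
  decide +kernel

lemma liftShift_apply_add : ∀ b ∈ doubleTranspositions, ∀ i,
    liftShift b i + liftShift b (b i) = 0 := by
  decide +kernel

lemma coverLift_mul_coverLift (ha : a ∈ doubleTranspositions) (hb : b ∈ doubleTranspositions) :
    coverLift a * coverLift b = coverLift b * coverLift (b⁻¹ * a * b) := by
  funext ⟨i, x⟩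
  have hletter : a (b i) = b ((b⁻¹ * a * b) i) := by simp
  have hshift := congrArg (x + ·) (liftShift_conj a ha b hb i)
  simp only [← add_assoc] at hshift
  exact Prod.ext hletter hshift

lemma coverLift_mul_self (hb : b ∈ doubleTranspositions) : coverLift b * coverLift b = 1 := by
  funext ⟨i, x⟩
  have hletter : b (b i) = i := congrArg (· i) (mem_doubleTranspositions_iff_sign.mp hb).1
  have hshift : x + liftShift b i + liftShift b (b i) = x := by
    rw [add_assoc, liftShift_apply_add b hb, add_zero]
  exact Prod.ext hletter hshift

lemma coverLift_mul_centralShift (g : Perm (Fin 6)) :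
    coverLift g * centralShift = centralShift * coverLift g :=
  funext fun ⟨_, _⟩ ↦ Prod.ext rfl (add_right_comm _ _ _)

lemma HurwitzStep.liftsToCentralShift_iff (h : HurwitzStep l l') :
    LiftsToCentralShift l ↔ LiftsToCentralShift l' := by
  have hmem := HurwitzReach.forall_mem_doubleTranspositions_iff (.single h)
  have hprod (hl : ∀ x ∈ l, x ∈ doubleTranspositions) :
      (l'.map coverLift).prod = (l.map coverLift).prod :=
    h.prod_map_eq (fun _ _ ↦ coverLift_mul_coverLift) hl
  exact ⟨fun ⟨hl, hlift⟩ ↦ ⟨hmem.mpr hl, (hprod hl).trans hlift⟩,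
    fun ⟨hl, hlift⟩ ↦ ⟨hmem.mp hl, (hprod (hmem.mp hl)).symm.trans hlift⟩⟩

lemma coverLift_conj (ha : a ∈ doubleTranspositions) (hb : b ∈ doubleTranspositions) :
    coverLift (MulAut.conj b a) = coverLift b * coverLift a * coverLift b := by
  have hinv : b⁻¹ = b := inv_eq_of_mul_eq_one_left (mem_doubleTranspositions_iff_sign.mp hb).1
  rw [mul_assoc, coverLift_mul_coverLift ha hb, ← mul_assoc, coverLift_mul_self hb, one_mul, hinv,
    MulAut.conj_apply, hinv]

lemma prod_map_coverLift_conj (hl : ∀ x ∈ l, x ∈ doubleTranspositions)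
    (hb : b ∈ doubleTranspositions) :
    ((l.map (MulAut.conj b)).map coverLift).prod =
      coverLift b * (l.map coverLift).prod * coverLift b := by
  induction l with
  | nil => simp [coverLift_mul_self hb]
  | cons a l ih =>
    rw [List.forall_mem_cons] at hl
    simp only [List.map_cons, List.prod_cons, ih hl.2, coverLift_conj hl.1 hb]
    simp only [mul_assoc, ← mul_assoc (coverLift b) (coverLift b), coverLift_mul_self hb, one_mul]

lemma LiftsToCentralShift.map_conj (h : LiftsToCentralShift l) (hs : s ∈ alternatingGroup (Fin 6)) :
    LiftsToCentralShift (l.map (MulAut.conj s)) := by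
  have conj_of_mem {b : Perm (Fin 6)} (hb : b ∈ doubleTranspositions)
      {l : List (Perm (Fin 6))} (h : LiftsToCentralShift l) :
      LiftsToCentralShift (l.map (MulAut.conj b)) := by
    refine ⟨by simpa only [List.forall_mem_map, conj_mem_doubleTranspositions_iff] using h.mem, ?_⟩
    rw [prod_map_coverLift_conj h.mem hb, h.prod_coverLift, coverLift_mul_centralShift, mul_assoc,
      coverLift_mul_self hb, mul_one]
  rw [← closure_doubleTranspositions] at hs
  induction hs using Subgroup.closure_induction_left generalizing l with
  | one => simpa using h
  | mul_left b hb t _ ih => simpa [Function.comp_def, mul_assoc] using conj_of_mem hb (ih h)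
  | inv_mul_cancel b hb t _ ih =>
    have hinv : b⁻¹ = b := inv_eq_of_mul_eq_one_left (mem_doubleTranspositions_iff_sign.mp hb).1
    rw [hinv]
    simpa [Function.comp_def, mul_assoc] using conj_of_mem hb (ih h)

lemma InnerRel.liftsToCentralShift_iff {k : ℕ} {g h : Fin k → Perm (Fin 6)}
    (hgh : InnerRel k g h) :
    LiftsToCentralShift (List.ofFn g) ↔ LiftsToCentralShift (List.ofFn h) := by
  obtain hmove | ⟨s, hs, rfl⟩ := hgh
  · exact hmove.hurwitzStep.liftsToCentralShift_iff
  · constructor <;> intro hlift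
    · simpa [Function.comp_def] using hlift.map_conj (inv_mem hs)
    · simpa [Function.comp_def, mul_assoc] using hlift.map_conj hs

lemma liftsToCentralShift_iff_of_eqvGen {k : ℕ} {g h : Fin k → Perm (Fin 6)}
    (hgh : Relation.EqvGen (InnerRel k) g h) :
    LiftsToCentralShift (List.ofFn g) ↔ LiftsToCentralShift (List.ofFn h) := by
  induction hgh with
  | rel _ _ h => exact h.liftsToCentralShift_iff
  | refl => rfl
  | symm _ _ _ ih => exact ih.symm
  | trans _ _ _ _ _ ih₁ ih₂ => exact ih₁.trans ih₂

end LiftingInvariant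

section Classes

/-- The mirror image of `baseTuple`, conjugate to it by an odd permutation. -/
def mirrorTuple (i : Fin 5) : Perm (Fin 6) := MulAut.conj (swap 0 1) (baseTuple i)

lemma liftsToCentralShift_baseTuple : LiftsToCentralShift (List.ofFn baseTuple) :=
  have hprod : ∀ (i : Fin 6) (x : ZMod 3),
      ((List.ofFn baseTuple).map coverLift).prod (i, x) = centralShift (i, x) := by
    decide +kernel
  ⟨by decide +kernel, funext fun ⟨i, x⟩ ↦ hprod i x⟩

lemma not_liftsToCentralShift_mirrorTuple : ¬ LiftsToCentralShift (List.ofFn mirrorTuple) :=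
  fun h ↦ absurd (congrFun h.prod_coverLift (0, 0)) (by decide +kernel)

lemma doubleTranspositions_eq_conj_baseTuple : ∀ g ∈ doubleTranspositions,
    ∃ i j k l, g = (baseTuple l * baseTuple k * baseTuple j)⁻¹ * baseTuple i *
      (baseTuple l * baseTuple k * baseTuple j) := by
  decide +kernel

lemma isNielsen_baseTuple : IsNielsen (List.ofFn baseTuple) where
  mem := by decide +kernel
  prod_eq := by decide +kernel
  closure_eq := by
    have mem_closure (i) : baseTuple i ∈ Subgroup.closure {x | x ∈ List.ofFn baseTuple} :=
      Subgroup.subset_closure (List.mem_ofFn.mpr ⟨i, rfl⟩)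
    rw [← closure_doubleTranspositions]
    apply le_antisymm
    · exact Subgroup.closure_mono (by decide +kernel :
        ∀ x ∈ List.ofFn baseTuple, x ∈ doubleTranspositions)
    · rw [Subgroup.closure_le]
      intro g hg
      obtain ⟨i, j, k, l, rfl⟩ := doubleTranspositions_eq_conj_baseTuple g hg
      have hmul := mul_mem (mul_mem (mem_closure l) (mem_closure k)) (mem_closure j)
      exact mul_mem (mul_mem (inv_mem hmul) (mem_closure i)) hmul

lemma isNielsen_mirrorTuple : IsNielsen (List.ofFn mirrorTuple) := by
  simpa [mirrorTuple, Function.comp_def] using isNielsen_baseTuple.map_conj (swap 0 1)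

lemma eqvGen_innerRel_conj {k : ℕ} (g : Fin k → Perm (Fin 6)) {s : Perm (Fin 6)}
    (hs : s ∈ alternatingGroup (Fin 6)) :
    Relation.EqvGen (InnerRel k) (fun i ↦ MulAut.conj s (g i)) g :=
  .rel _ _ (.inr ⟨s, hs, by simp [mul_assoc]⟩)

lemma eqvGen_innerRel_base_or_mirror {g : Fin 5 → Perm (Fin 6)} (hg : g ∈ NielsenSet 5) :
    Relation.EqvGen (InnerRel 5) g baseTuple ∨ Relation.EqvGen (InnerRel 5) g mirrorTuple := by
  rw [mem_nielsenSet_iff] at hg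
  obtain ⟨s, hs⟩ := (hg.toIsProductOne.reachesStandardForm (by simp)).resolve_left
    (hg.not_reachesHeadPair_eq (by simp))
  rw [List.map_ofFn] at hs
  have hconj : Relation.EqvGen (InnerRel 5) g (fun i ↦ MulAut.conj s (baseTuple i)) :=
    Relation.EqvGen.mono (fun _ _ ↦ .inl) _ _ hs.hurwitzEquiv
  obtain heven | hodd := Int.units_eq_one_or (Perm.sign s)
  · exact .inl (hconj.trans _ _ _ (eqvGen_innerRel_conj _ (Perm.mem_alternatingGroup.mpr heven)))
  · have hmem : s * swap 0 1 ∈ alternatingGroup (Fin 6) := by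
      rw [Perm.mem_alternatingGroup, Perm.sign_mul, hodd, Perm.sign_swap (by decide)]; rfl
    have hmirror : (fun i ↦ MulAut.conj s (baseTuple i)) =
        fun i ↦ MulAut.conj (s * swap 0 1) (mirrorTuple i) := by
      funext i
      rw [mirrorTuple, ← MulAut.mul_apply, ← map_mul, mul_assoc, swap_mul_self, mul_one]
    exact .inr (hconj.trans _ _ _ (hmirror ▸ eqvGen_innerRel_conj _ hmem))

end Classes

/-- The quotient of `Ni(A₆, C_{2×2}^5)` by the equivalence relation generated
by Hurwitz moves and simultaneous conjugation by a single element of `A₆`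
(the inner action) has exactly two equivalence classes. -/
theorem stmt_3 :
    Nat.card (Quotient ((Relation.EqvGen.setoid (InnerRel 5)).comap
      (Subtype.val : ↥(NielsenSet 5) → (Fin 5 → Equiv.Perm (Fin 6))))) = 2 := by
  rw [Nat.card_eq_two_iff]
  refine ⟨⟦⟨baseTuple, mem_nielsenSet_iff.mpr isNielsen_baseTuple⟩⟧,
    ⟦⟨mirrorTuple, mem_nielsenSet_iff.mpr isNielsen_mirrorTuple⟩⟧, fun heq ↦ ?_, ?_⟩
  · exact not_liftsToCentralShift_mirrorTuple <|
      (liftsToCentralShift_iff_of_eqvGen (Quotient.exact heq)).mp liftsToCentralShift_baseTuple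
  · refine Set.eq_univ_of_forall fun q ↦ q.inductionOn fun ⟨g, hg⟩ ↦ ?_
    exact (eqvGen_innerRel_base_or_mirror hg).imp Quotient.sound Quotient.sound
end

section
/- Let S be a finite subset of the alternating group A6 on 6 letters such that every element of S has order 2 (i.e., is a product of two disjoint transpositions), S generates A6, and |S| ≥ 4. Then there exists a subset T of S with |T| = 4 such that T generates A6. -/
/-!
If the set contains no generating four-element subset, then starting from two non-commuting
involutions `a`, `b` one finds `c`, `d` with `⟨a, b⟩ < ⟨a, b, c⟩ < ⟨a, b, c, d⟩ < A₆`. Such a chain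
does not exist. The group `⟨a, b⟩` is dihedral of order `2n`, where `n ∈ {3, 4, 5}` is the order of
`a * b`, and, `A₆` being simple of order `360`, the last group has order at most `60`. For `n = 4`
Lagrange's theorem rules this out. For odd `n` one also uses that every element of `A₆` has
prime-power order. An involution therefore commutes with no nontrivial element of a `p`-group, `p`
odd, and if it normalizes the `p`-group, it inverts every element of it. Hence a group which is
generated by involutions and has a nontrivial normal Sylow `p`-subgroup `P` has order `2 |P|`, and
Sylow's theorem bounds the indices in the chain from below.
-/

section Subgroups

variable {G : Type*} [Group G]

theorem card_mul_relIndex {H K : Subgroup G} (hHK : H ≤ K) :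
    Nat.card H * H.relIndex K = Nat.card K := by
  simpa only [Subgroup.relIndex_bot_left] using Subgroup.relIndex_mul_relIndex ⊥ H K bot_le hHK

theorem two_le_relIndex_of_lt {H K : Subgroup G} [Finite K] (hHK : H < K) : 2 ≤ H.relIndex K := by
  have hne_zero : H.relIndex K ≠ 0 := (H.subgroupOf K).index_ne_zero_of_finite
  have hne_one : H.relIndex K ≠ 1 := fun h ↦ hHK.not_ge (Subgroup.relIndex_eq_one.mp h)
  lia

theorem closure_lt_closure_insert {X : Set G} {x : G} (hx : x ∉ Subgroup.closure X) :
    Subgroup.closure X < Subgroup.closure (insert x X) :=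
  lt_of_le_not_ge (Subgroup.closure_mono (Set.subset_insert x X)) fun h ↦
    hx (h (Subgroup.subset_closure (Set.mem_insert x X)))

theorem exists_subset_card_eq_closure_eq {S U : Finset G} {n : ℕ} (hUS : U ⊆ S) (hUn : U.card ≤ n)
    (hnS : n ≤ S.card) (hSU : (S : Set G) ⊆ Subgroup.closure (U : Set G)) :
    ∃ T ⊆ S, T.card = n ∧ Subgroup.closure (T : Set G) = Subgroup.closure (S : Set G) := by
  obtain ⟨T, hUT, hTS, hT⟩ := Finset.exists_subsuperset_card_eq hUS hUn hnS
  have hST := hSU.trans (Subgroup.closure_mono (Finset.coe_subset.mpr hUT))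
  exact ⟨T, hTS, hT, le_antisymm (Subgroup.closure_mono (Finset.coe_subset.mpr hTS))
    ((Subgroup.closure_le _).mpr hST)⟩

theorem card_dvd_factorial_index [IsSimpleGroup G] {H : Subgroup G} [H.FiniteIndex] (hH : H ≠ ⊤) :
    Nat.card G ∣ H.index.factorial := by
  have hinj : Function.Injective (MulAction.toPermHom G (G ⧸ H)) := by
    rw [← MonoidHom.ker_eq_bot_iff, ← Subgroup.normalCore_eq_ker]
    refine H.normalCore_normal.eq_bot_or_eq_top.resolve_right fun htop ↦ ?_
    exact hH (top_le_iff.mp (htop ▸ H.normalCore_le))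
  rw [Subgroup.index, ← Nat.card_perm]
  exact Subgroup.card_dvd_of_injective _ hinj

end Subgroups

section Involutions

variable {G : Type*} [Group G]

theorem relIndex_closure_eq_two {X : Set G} {N : Subgroup G} (hX : ∀ x ∈ X, orderOf x = 2)
    {a : G} (ha : a ∈ X) (haN : a ∉ N) (hmul : ∀ x ∈ X, ∀ y ∈ X, x * y ∈ N) :
    N.relIndex (Subgroup.closure X) = 2 := by
  have ha_inv : a⁻¹ = a := inv_eq_self_of_orderOf_eq_two (hX a ha)
  have mul_mem_or {g x : G} (hx : x ∈ X) (hg : g * a ∈ N ∨ g ∈ N) : g * x * a ∈ N ∨ g * x ∈ N := by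
    rcases hg with hg | hg
    · right
      have : g * x = g * a * (a⁻¹ * x) := by group
      rw [this, ha_inv]
      exact N.mul_mem hg (hmul a ha x hx)
    · left
      rw [mul_assoc]
      exact N.mul_mem hg (hmul x hx a ha)
  refine Subgroup.relIndex_eq_two_iff_exists_notMem_and.mpr
    ⟨a, Subgroup.subset_closure ha, haN, fun g hg ↦ ?_⟩
  induction hg using Subgroup.closure_induction_right with
  | one => exact .inr N.one_mem
  | mul_right g _ x hx ih => exact mul_mem_or hx ih
  | mul_inv_cancel g _ x hx ih =>
    rw [inv_eq_self_of_orderOf_eq_two (hX x hx)]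
    exact mul_mem_or hx ih

theorem commute_of_orderOf_mul_dvd_two {a b : G} (ha : orderOf a = 2) (hb : orderOf b = 2)
    (hab : orderOf (a * b) ∣ 2) : Commute a b := by
  have hself : (a * b)⁻¹ = a * b :=
    inv_eq_of_mul_eq_one_left (by rw [← sq, orderOf_dvd_iff_pow_eq_one.mp hab])
  rw [mul_inv_rev, inv_eq_self_of_orderOf_eq_two ha, inv_eq_self_of_orderOf_eq_two hb] at hself
  exact hself.symm

theorem card_closure_pair_of_not_commute {a b : G} (ha : orderOf a = 2) (hb : orderOf b = 2)
    (hab : ¬Commute a b) : Nat.card (Subgroup.closure {a, b}) = 2 * orderOf (a * b) := by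
  have ha_sq : a * a = 1 := by rw [← sq, ← ha, pow_orderOf_eq_one]
  have hb_sq : b * b = 1 := by rw [← sq, ← hb, pow_orderOf_eq_one]
  have ha_notMem : a ∉ Subgroup.zpowers (a * b) := by
    rintro ⟨k, hk⟩
    have : Commute a (a * b) := by
      simpa only [hk] using ((Commute.refl (a * b)).zpow_left k)
    exact hab <| mul_left_cancel (a := a) <| by rw [this.eq, mul_assoc]
  have hmul : ∀ x ∈ ({a, b} : Set G), ∀ y ∈ ({a, b} : Set G), x * y ∈ Subgroup.zpowers (a * b) := by
    have hba : b * a = (a * b)⁻¹ := by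
      rw [mul_inv_rev, inv_eq_self_of_orderOf_eq_two ha, inv_eq_self_of_orderOf_eq_two hb]
    rintro x (rfl | rfl) y (rfl | rfl)
    · exact ha_sq ▸ one_mem _
    · exact Subgroup.mem_zpowers _
    · exact hba ▸ inv_mem (Subgroup.mem_zpowers _)
    · exact hb_sq ▸ one_mem _
  have hle : Subgroup.zpowers (a * b) ≤ Subgroup.closure {a, b} :=
    Subgroup.zpowers_le.mpr <| mul_mem (Subgroup.subset_closure (by simp))
      (Subgroup.subset_closure (by simp))
  have hindex := relIndex_closure_eq_two (X := {a, b}) (by simp [ha, hb]) (by simp) ha_notMem hmul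
  rw [← card_mul_relIndex hle, hindex, Nat.card_zpowers, mul_comm]

end Involutions

/-- The class of groups (often called CP-groups or EPPO-groups) all of whose elements have prime
power order. An element of infinite order is excluded, since its `orderOf` is `0`. -/
def HasPrimePowerOrders (G : Type*) [Group G] : Prop :=
  ∀ g : G, ∃ p k : ℕ, p.Prime ∧ orderOf g = p ^ k

section PrimePowerOrders

variable {G : Type*} [Group G] {p : ℕ} [Fact p.Prime]

theorem HasPrimePowerOrders.exists_orderOf_eq_pow_of_commute (hG : HasPrimePowerOrders G)
    {x y : G} (hx : p ∣ orderOf x) (hxy : Commute x y) : ∃ k, orderOf y = p ^ k := by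
  have hp : p.Prime := Fact.out
  obtain ⟨p', m, hp', hxm⟩ := hG x
  obtain rfl : p = p' := Nat.prime_eq_prime_of_dvd_pow hp hp' (hxm ▸ hx)
  obtain ⟨q, k, hq, hyk⟩ := hG y
  rcases eq_or_ne p q with rfl | hpq
  · exact ⟨k, hyk⟩
  have hcoprime : (orderOf x).Coprime (orderOf y) := by
    rw [hxm, hyk]
    exact Nat.coprime_pow_primes m k hp hq hpq
  have hmul := hxy.orderOf_mul_eq_mul_orderOf_of_coprime hcoprime
  obtain ⟨r, j, hr, hrj⟩ := hG (x * y)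
  obtain rfl : p = r := Nat.prime_eq_prime_of_dvd_pow hp hr (hrj ▸ hmul ▸ hx.mul_right _)
  have hq_not_dvd : ¬q ∣ orderOf y := fun hqy ↦
    hpq (Nat.prime_eq_prime_of_dvd_pow hq hp (hrj ▸ hmul ▸ hqy.mul_left _)).symm
  have hk : k = 0 := by
    by_contra hk
    exact hq_not_dvd (hyk ▸ dvd_pow_self q hk)
  exact ⟨0, by simp [hyk, hk]⟩

variable [Finite G]

theorem HasPrimePowerOrders.conj_eq_inv_of_orderOf_eq_two (hG : HasPrimePowerOrders G)
    (hp2 : p ≠ 2) {P : Subgroup G} [P.Normal] (hP : IsPGroup p P) {a : G} (ha : orderOf a = 2)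
    {g : G} (hg : g ∈ P) : a * g * a⁻¹ = g⁻¹ := by
  have hfree : MonoidHom.FixedPointFree (MulAut.conjNormal (H := P) a) := by
    intro x hx
    by_contra hx_ne
    have hcomm : Commute (x : G) a := by
      have hx' : a * x * a⁻¹ = x := by simpa using congrArg Subtype.val hx
      exact (mul_inv_eq_iff_eq_mul.mp hx').symm
    have hdvd : p ∣ orderOf (x : G) := by
      simpa only [Subgroup.orderOf_coe] using hP.dvd_orderOf hx_ne
    obtain ⟨k, hk⟩ := hG.exists_orderOf_eq_pow_of_commute hdvd hcomm
    have : 2 ∣ p ^ k := by rw [← hk, ha]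
    exact hp2 (Nat.prime_eq_prime_of_dvd_pow Nat.prime_two Fact.out this).symm
  have hinvol : Function.Involutive (MulAut.conjNormal (H := P) a) := by
    intro x
    rw [← MulAut.mul_apply, ← map_mul, ← sq, ← ha, pow_orderOf_eq_one, map_one, MulAut.one_apply]
  simpa using congrArg Subtype.val (congrFun (hfree.coe_eq_inv_of_involutive hinvol) ⟨g, hg⟩)

theorem HasPrimePowerOrders.mul_mem_sylow_of_orderOf_eq_two (hG : HasPrimePowerOrders G)
    (hp2 : p ≠ 2) (P : Sylow p G) [hPn : P.Normal] (hP : (P : Subgroup G) ≠ ⊥) {a b : G}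
    (ha : orderOf a = 2) (hb : orderOf b = 2) : a * b ∈ P := by
  obtain ⟨g, hg⟩ := Subgroup.ne_bot_iff_exists_ne_one.mp hP
  have hcomm : Commute (g : G) (a * b) := by
    have hconj_a := hG.conj_eq_inv_of_orderOf_eq_two hp2 P.isPGroup' ha (inv_mem g.2)
    have hconj_b := hG.conj_eq_inv_of_orderOf_eq_two hp2 P.isPGroup' hb g.2
    have hconj : a * b * g * (a * b)⁻¹ = g := by
      calc a * b * g * (a * b)⁻¹ = a * (b * g * b⁻¹) * a⁻¹ := by group
        _ = g := by rw [hconj_b, hconj_a, inv_inv]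
    exact (mul_inv_eq_iff_eq_mul.mp hconj).symm
  have hdvd : p ∣ orderOf (g : G) := by
    simpa only [Subgroup.orderOf_coe] using P.isPGroup'.dvd_orderOf hg
  obtain ⟨k, hk⟩ := hG.exists_orderOf_eq_pow_of_commute hdvd hcomm
  have hpgroup : IsPGroup p (Subgroup.zpowers (a * b)) :=
    IsPGroup.of_card (by rw [Nat.card_zpowers, hk])
  obtain ⟨Q, hQ⟩ := hpgroup.exists_le_sylow
  have := Sylow.unique_of_normal P hPn
  exact Subsingleton.elim Q P ▸ hQ (Subgroup.mem_zpowers _)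

theorem HasPrimePowerOrders.card_eq_two_mul_card_sylow (hG : HasPrimePowerOrders G)
    (hp2 : p ≠ 2) {X : Set G} (hX : ∀ x ∈ X, orderOf x = 2) (hgen : Subgroup.closure X = ⊤)
    (P : Sylow p G) [P.Normal] (hP : (P : Subgroup G) ≠ ⊥) : Nat.card G = 2 * Nat.card P := by
  obtain ⟨a, ha⟩ : X.Nonempty := by
    rw [Set.nonempty_iff_ne_empty]
    rintro rfl
    rw [Subgroup.closure_empty] at hgen
    exact hP (le_bot_iff.mp (hgen ▸ le_top))
  have haP : a ∉ (P : Subgroup G) := by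
    intro haP
    obtain ⟨k, hk⟩ := IsPGroup.iff_orderOf.mp P.isPGroup' ⟨a, haP⟩
    rw [Subgroup.orderOf_mk, hX a ha] at hk
    exact hp2 (Nat.prime_eq_prime_of_dvd_pow Nat.prime_two Fact.out hk.dvd).symm
  have hindex : (P : Subgroup G).index = 2 := by
    rw [← Subgroup.relIndex_top_right, ← hgen]
    exact relIndex_closure_eq_two hX ha haP fun x hx y hy ↦
      hG.mul_mem_sylow_of_orderOf_eq_two hp2 P hP (hX x hx) (hX y hy)
  rw [← (P : Subgroup G).index_mul_card, hindex]

theorem exists_normal_subgroupOf_card_eq_of_card_eq_two_mul {K : Subgroup G} {n : ℕ}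
    (hcard : Nat.card K = 2 * p ^ n) :
    ∃ P ≤ K, (P.subgroupOf K).Normal ∧ Nat.card P = p ^ n := by
  obtain ⟨P, hP⟩ := Sylow.exists_subgroup_card_pow_prime p (hcard ▸ dvd_mul_left (p ^ n) 2)
  have hindex : P.index = 2 := by
    have := P.card_mul_index
    rw [hP, hcard, mul_comm] at this
    exact Nat.eq_of_mul_eq_mul_right (pow_pos (Fact.out : p.Prime).pos n) this
  refine ⟨P.map K.subtype, Subgroup.map_subtype_le P, ?_, ?_⟩
  · rw [Subgroup.subgroupOf, Subgroup.comap_map_eq_self_of_injective K.subtype_injective]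
    exact Subgroup.normal_of_index_eq_two hindex
  · rw [Subgroup.card_map_of_injective K.subtype_injective, hP]

theorem HasPrimePowerOrders.exists_dvd_index_modEq_one (hG : HasPrimePowerOrders G)
    (hp2 : p ≠ 2) {X : Set G} (hX : ∀ x ∈ X, orderOf x = 2) (hgen : Subgroup.closure X = ⊤)
    {K : Subgroup G} {n : ℕ} (hn : n ≠ 0) (hcard : Nat.card K = 2 * p ^ n)
    (hindex : ¬p ∣ K.index) (hK : K ≠ ⊤) : ∃ m, m ∣ K.index ∧ 1 < m ∧ m ≡ 1 [MOD p] := by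
  have hp : p.Prime := Fact.out
  obtain ⟨H, hHK, hH_normal, hH_card⟩ := exists_normal_subgroupOf_card_eq_of_card_eq_two_mul hcard
  have hH_index : H.index = 2 * K.index := by
    have hrel := card_mul_relIndex hHK
    rw [hH_card, hcard, mul_comm] at hrel
    rw [← Subgroup.relIndex_mul_index hHK, Nat.eq_of_mul_eq_mul_right (pow_pos hp.pos n) hrel]
  have hH_not_dvd : ¬p ∣ H.index := by
    rw [hH_index, hp.dvd_mul, not_or]
    exact ⟨fun h ↦ hp2 ((Nat.prime_dvd_prime_iff_eq hp Nat.prime_two).mp h), hindex⟩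
  let P : Sylow p G := (IsPGroup.of_card hH_card).toSylow hH_not_dvd
  have hP_card : Nat.card P = p ^ n := hH_card
  have hdvd : Nat.card (Sylow p G) ∣ K.index := by
    rw [P.card_eq_index_normalizer]
    exact Subgroup.index_dvd_of_le ((Subgroup.normal_subgroupOf_iff_le_normalizer hHK).mp hH_normal)
  refine ⟨Nat.card (Sylow p G), hdvd, ?_, card_sylow_modEq_one p G⟩
  by_contra! hle
  have : Subsingleton (Sylow p G) := Finite.card_le_one_iff_subsingleton.mp hle
  have hP_ne_bot : (P : Subgroup G) ≠ ⊥ := by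
    rw [Ne, ← Subgroup.card_eq_one]
    exact hP_card ▸ (Nat.one_lt_pow hn hp.one_lt).ne'
  have := P.normal_of_subsingleton
  refine hK (Subgroup.eq_top_of_card_eq K ?_)
  rw [hcard, ← hP_card, hG.card_eq_two_mul_card_sylow hp2 hX hgen P hP_ne_bot]

theorem HasPrimePowerOrders.relIndex_modEq_one_of_prime {X : Set G}
    (hG : HasPrimePowerOrders (Subgroup.closure X)) (hp2 : p ≠ 2) (hX : ∀ x ∈ X, orderOf x = 2)
    {K : Subgroup G} (hK : K ≤ Subgroup.closure X) {n : ℕ} (hn : n ≠ 0)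
    (hcard : Nat.card K = 2 * p ^ n) (hprime : (K.relIndex (Subgroup.closure X)).Prime)
    (hne : K.relIndex (Subgroup.closure X) ≠ p) :
    K.relIndex (Subgroup.closure X) ≡ 1 [MOD p] := by
  have hp : p.Prime := Fact.out
  have hX' : ∀ x ∈ (Subtype.val ⁻¹' X : Set (Subgroup.closure X)), orderOf x = 2 := fun x hx ↦ by
    rw [← Subgroup.orderOf_coe, hX x hx]
  have hcard' : Nat.card (K.subgroupOf (Subgroup.closure X)) = 2 * p ^ n := by
    rw [Nat.card_congr (Subgroup.subgroupOfEquivOfLe hK).toEquiv, hcard]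
  have hK_ne_top : K.subgroupOf (Subgroup.closure X) ≠ ⊤ := by
    rw [Ne, Subgroup.subgroupOf_eq_top, ← Subgroup.relIndex_eq_one]
    exact hprime.ne_one
  have hnot_dvd : ¬p ∣ K.relIndex (Subgroup.closure X) := fun h ↦
    hne ((Nat.prime_dvd_prime_iff_eq hp hprime).mp h).symm
  obtain ⟨m, hm_dvd, hm_one, hm⟩ := hG.exists_dvd_index_modEq_one hp2 hX'
    Subgroup.closure_closure_coe_preimage hn hcard' hnot_dvd hK_ne_top
  rcases (Nat.dvd_prime hprime).mp hm_dvd with rfl | rfl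
  · exact absurd hm_one (lt_irrefl 1)
  · exact hm

end PrimePowerOrders

section AlternatingGroupSix

theorem card_alternatingGroup_fin_six : Nat.card (alternatingGroup (Fin 6)) = 360 := by
  rw [nat_card_alternatingGroup, Nat.card_fin]
  rfl

theorem six_le_relIndex_alternatingGroup_fin_six {H : Subgroup (Equiv.Perm (Fin 6))}
    (hH : H < alternatingGroup (Fin 6)) : 6 ≤ H.relIndex (alternatingGroup (Fin 6)) := by
  have := alternatingGroup.isSimpleGroup (α := Fin 6) (by simp)
  have hdvd : 360 ∣ (H.relIndex (alternatingGroup (Fin 6))).factorial := by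
    rw [← card_alternatingGroup_fin_six]
    refine card_dvd_factorial_index ?_
    rw [Ne, Subgroup.subgroupOf_eq_top]
    exact hH.not_ge
  by_contra! hlt
  exact absurd (hdvd.trans (Nat.factorial_dvd_factorial (Nat.le_of_lt_succ hlt))) (by decide)

theorem orderOf_dvd_of_mem_alternatingGroup_fin_six {g : Equiv.Perm (Fin 6)}
    (hg : g ∈ alternatingGroup (Fin 6)) : orderOf g ∣ 3 ∨ orderOf g ∣ 4 ∨ orderOf g ∣ 5 := by
  have hpow : ∀ g : Equiv.Perm (Fin 6), g.sign = 1 → g ^ 3 = 1 ∨ g ^ 4 = 1 ∨ g ^ 5 = 1 := by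
    decide +kernel
  simpa only [orderOf_dvd_iff_pow_eq_one] using hpow g (Equiv.Perm.mem_alternatingGroup.mp hg)

theorem hasPrimePowerOrders_of_le_alternatingGroup_fin_six {H : Subgroup (Equiv.Perm (Fin 6))}
    (hH : H ≤ alternatingGroup (Fin 6)) : HasPrimePowerOrders H := by
  intro g
  have exists_of_dvd {p k : ℕ} (hp : p.Prime) (h : orderOf (g : Equiv.Perm (Fin 6)) ∣ p ^ k) :
      ∃ p k : ℕ, p.Prime ∧ orderOf g = p ^ k := by
    obtain ⟨j, -, hj⟩ := (Nat.dvd_prime_pow hp).mp h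
    exact ⟨p, j, hp, by rw [← Subgroup.orderOf_coe, hj]⟩
  rcases orderOf_dvd_of_mem_alternatingGroup_fin_six (hH g.2) with h | h | h
  · exact exists_of_dvd (k := 1) Nat.prime_three h
  · exact exists_of_dvd (k := 2) Nat.prime_two h
  · exact exists_of_dvd (k := 1) Nat.prime_five h

theorem relIndex_modEq_one_of_prime_alternatingGroup_fin_six {p : ℕ} [Fact p.Prime] (hp2 : p ≠ 2)
    {X : Set (Equiv.Perm (Fin 6))} (hX : ∀ x ∈ X, x ∈ alternatingGroup (Fin 6) ∧ orderOf x = 2)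
    {K : Subgroup (Equiv.Perm (Fin 6))} (hK : K ≤ Subgroup.closure X) {n : ℕ} (hn : n ≠ 0)
    (hcard : Nat.card K = 2 * p ^ n) (hprime : (K.relIndex (Subgroup.closure X)).Prime)
    (hne : K.relIndex (Subgroup.closure X) ≠ p) :
    K.relIndex (Subgroup.closure X) ≡ 1 [MOD p] :=
  (hasPrimePowerOrders_of_le_alternatingGroup_fin_six
    ((Subgroup.closure_le _).mpr fun x hx ↦ (hX x hx).1)).relIndex_modEq_one_of_prime
    hp2 (fun x hx ↦ (hX x hx).2) hK hn hcard hprime hne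

theorem orderOf_mul_eq_of_not_commute_fin_six {a b : Equiv.Perm (Fin 6)}
    (ha : a ∈ alternatingGroup (Fin 6)) (hb : b ∈ alternatingGroup (Fin 6))
    (ha2 : orderOf a = 2) (hb2 : orderOf b = 2) (hab : ¬Commute a b) :
    orderOf (a * b) = 3 ∨ orderOf (a * b) = 4 ∨ orderOf (a * b) = 5 := by
  have hnot_dvd : ¬orderOf (a * b) ∣ 2 := mt (commute_of_orderOf_mul_dvd_two ha2 hb2) hab
  rcases orderOf_dvd_of_mem_alternatingGroup_fin_six (mul_mem ha hb) with h | h | h <;>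
    have := Nat.le_of_dvd (by norm_num) h <;> interval_cases orderOf (a * b) <;> simp_all

theorem index_cases_of_mul_eq_180 {n i j k : ℕ} (hn : n = 3 ∨ n = 4 ∨ n = 5)
    (hi : 2 ≤ i) (hj : 2 ≤ j) (hk : 6 ≤ k) (h : n * i * j * k = 180) :
    n = 5 ∧ (i = 2 ∨ i = 3) ∨ n = 3 ∧ (i = 2 ∨ i = 5) ∨ n = 3 ∧ i = 3 ∧ j = 2 := by
  have h_le : n * i * j * 6 ≤ 180 := h ▸ Nat.mul_le_mul_left _ hk
  have hi_le : i ≤ 5 := by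
    have := Nat.mul_le_mul (Nat.mul_le_mul_right i (show 3 ≤ n by lia)) hj
    lia
  have hj_le : j ≤ 5 := by
    have := Nat.mul_le_mul_right j (Nat.mul_le_mul (show 3 ≤ n by lia) hi)
    lia
  rcases hn with rfl | rfl | rfl <;> interval_cases i <;> interval_cases j <;> lia

theorem closure_eq_alternatingGroup_fin_six_of_chain {a b c d : Equiv.Perm (Fin 6)}
    (hX : ∀ x ∈ ({d, c, a, b} : Set (Equiv.Perm (Fin 6))),
      x ∈ alternatingGroup (Fin 6) ∧ orderOf x = 2)
    (hab : ¬Commute a b) (hc : c ∉ Subgroup.closure {a, b})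
    (hd : d ∉ Subgroup.closure {c, a, b}) :
    Subgroup.closure {d, c, a, b} = alternatingGroup (Fin 6) := by
  have hle : Subgroup.closure {d, c, a, b} ≤ alternatingGroup (Fin 6) :=
    (Subgroup.closure_le _).mpr fun x hx ↦ (hX x hx).1
  have habc := closure_lt_closure_insert hc
  have habcd := closure_lt_closure_insert hd
  obtain ⟨ha, ha2⟩ := hX a (by simp)
  obtain ⟨hb, hb2⟩ := hX b (by simp)
  have hcard_ab := card_closure_pair_of_not_commute ha2 hb2 hab
  have hcard_abc := card_mul_relIndex habc.le
  by_contra hne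
  have hprod := card_mul_relIndex hle
  rw [← card_mul_relIndex habcd.le, ← hcard_abc, hcard_ab, card_alternatingGroup_fin_six] at hprod
  have hn := orderOf_mul_eq_of_not_commute_fin_six ha hb ha2 hb2 hab
  rcases index_cases_of_mul_eq_180 hn (two_le_relIndex_of_lt habc) (two_le_relIndex_of_lt habcd)
    (six_le_relIndex_alternatingGroup_fin_six (lt_of_le_of_ne hle hne)) (by linarith)
    with ⟨hn_eq, hi⟩ | ⟨hn_eq, hi⟩ | ⟨hn_eq, hi, hj⟩
  · have : Fact (Nat.Prime 5) := ⟨Nat.prime_five⟩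
    have := relIndex_modEq_one_of_prime_alternatingGroup_fin_six (p := 5) (by decide)
      (fun x hx ↦ hX x (.inr hx)) habc.le one_ne_zero (by rw [hcard_ab, hn_eq, pow_one])
    rcases hi with hi | hi <;> rw [hi] at this <;>
      exact absurd (this (by decide) (by decide)) (by decide)
  · have := relIndex_modEq_one_of_prime_alternatingGroup_fin_six (p := 3) (by decide)
      (fun x hx ↦ hX x (.inr hx)) habc.le one_ne_zero (by rw [hcard_ab, hn_eq, pow_one])
    rcases hi with hi | hi <;> rw [hi] at this <;>
      exact absurd (this (by decide) (by decide)) (by decide)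
  · have := relIndex_modEq_one_of_prime_alternatingGroup_fin_six (p := 3) (by decide)
      hX habcd.le two_ne_zero (by rw [← hcard_abc, hcard_ab, hn_eq, hi]; rfl)
    rw [hj] at this
    exact absurd (this (by decide) (by decide)) (by decide)

theorem exists_not_commute_of_closure_eq_alternatingGroup {α : Type*} [Fintype α] [DecidableEq α]
    (hα : 4 ≤ Nat.card α) {X : Set (Equiv.Perm α)}
    (hX : Subgroup.closure X = alternatingGroup α) : ∃ a ∈ X, ∃ b ∈ X, ¬Commute a b := by
  by_contra! hcomm
  have hα_le : Nat.card α ≤ 3 := alternatingGroup.isMulCommutative_iff_card_le_three.mp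
    (hX ▸ Subgroup.isMulCommutative_closure hcomm)
  lia

end AlternatingGroupSix

/-- Every finite set of order-2 elements of `A₆` (products of two disjoint
transpositions) of cardinality at least `4` that generates `A₆` contains a
generating subset of cardinality `4`. -/
theorem stmt_9 (S : Finset (Equiv.Perm (Fin 6)))
    (hmem : ∀ x ∈ S, x ∈ alternatingGroup (Fin 6))
    (hord : ∀ x ∈ S, orderOf x = 2)
    (hgen : Subgroup.closure (S : Set (Equiv.Perm (Fin 6))) = alternatingGroup (Fin 6))
    (hcard : 4 ≤ S.card) :
    ∃ T ⊆ S, T.card = 4 ∧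
      Subgroup.closure (T : Set (Equiv.Perm (Fin 6))) = alternatingGroup (Fin 6) := by
  by_contra! hT
  have escape (U : Finset (Equiv.Perm (Fin 6))) (hUS : U ⊆ S) (hU : U.card ≤ 4) :
      ∃ x ∈ S, x ∉ Subgroup.closure (U : Set (Equiv.Perm (Fin 6))) := by
    by_contra! hSU
    obtain ⟨T, hTS, hT_card, hT_gen⟩ := exists_subset_card_eq_closure_eq hUS hU hcard hSU
    exact hT T hTS hT_card (hT_gen.trans hgen)
  obtain ⟨a, ha, b, hb, hab⟩ := exists_not_commute_of_closure_eq_alternatingGroup (by simp) hgen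
  rw [Finset.mem_coe] at ha hb
  obtain ⟨c, hc, hc_escape⟩ := escape {a, b} (by grind) (by grind [Finset.card_le_two])
  obtain ⟨d, hd, hd_escape⟩ := escape {c, a, b} (by grind) Finset.card_le_three.step
  obtain ⟨e, he, he_escape⟩ := escape {d, c, a, b} (by grind) Finset.card_le_four
  simp only [Finset.coe_insert, Finset.coe_singleton] at hc_escape hd_escape he_escape
  have hgen_dcab := closure_eq_alternatingGroup_fin_six_of_chain
    (by rintro x (rfl | rfl | rfl | rfl) <;> exact ⟨hmem _ ‹_›, hord _ ‹_›⟩) hab hc_escape hd_escape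
  exact he_escape (hgen_dcab ▸ hmem e he)
end
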